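/- arXiv:2207.03016 — 5 statements merged into one kernel-verified Lean document; each statement's English description precedes it below -/
import Mathlib

section
/- D̂ is nonempty if and only if T* ≤ 1. -/
open Finset

noncomputable section

/-- Membership in the domain `D` of the optimization problem. -/
def memD (ℓ : ℕ) (a b x y : ℕ → ℝ) : Prop :=
  (∀ i ∈ Finset.Icc 1 ℓ, 0 < x i ∧ 0 < y i) ∧
  (∑ i ∈ Finset.Icc 1 ℓ, (x i + y i)) ≤ 1 ∧
  (∀ m ∈ Finset.Icc 1 ℓ,
    0 ≤ ∑ i ∈ Finset.Icc 1 m, (x i - (a i) ^ 2 / (2 * x i) - (b i) ^ 2 / (2 * y i)))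

/-- Membership in the domain `D̂`: elements of `D` where the cumulative condition holds with
equality for `m = ℓ`. -/
def memDhat (ℓ : ℕ) (a b x y : ℕ → ℝ) : Prop :=
  memD ℓ a b x y ∧
  (∑ i ∈ Finset.Icc 1 ℓ, (x i - (a i) ^ 2 / (2 * x i) - (b i) ^ 2 / (2 * y i))) = 0

/-- The convention `c_0 = c_ℓ = 0`. -/
def cbar (ℓ : ℕ) (c : ℕ → ℝ) (m : ℕ) : ℝ := if m = 0 ∨ m = ℓ then 0 else c m

/-- Membership in `D^m(c, c')`. -/
def memDm (a b : ℕ → ℝ) (N : ℝ) (m : ℕ) (c c' x y : ℝ) : Prop :=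
  0 < x ∧ 0 < y ∧ x + y ≤ N ∧ c + x - (a m) ^ 2 / (2 * x) - (b m) ^ 2 / (2 * y) = c'

/-- Membership in `D̃(c_1, …, c_{ℓ-1})`. -/
def memDtilde (ℓ : ℕ) (a b : ℕ → ℝ) (N : ℝ) (c x y : ℕ → ℝ) : Prop :=
  (∑ i ∈ Finset.Icc 1 ℓ, (x i + y i)) ≤ 1 ∧
  ∀ m ∈ Finset.Icc 1 ℓ, memDm a b N m (cbar ℓ c (m - 1)) (cbar ℓ c m) (x m) (y m)

/-- Membership in `D^c`. -/
def memDc (ℓ : ℕ) (a b : ℕ → ℝ) (N : ℝ) (c : ℕ → ℝ) : Prop :=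
  (∀ m ∈ Finset.Icc 1 (ℓ - 1), 0 ≤ c m) ∧ ∃ x y, memDtilde ℓ a b N c x y

/-- `(x, y)` minimizes `x + y` over `D^m(c, c')`. -/
def isArgminDm (a b : ℕ → ℝ) (N : ℝ) (m : ℕ) (c c' x y : ℝ) : Prop :=
  memDm a b N m c c' x y ∧ ∀ x' y' : ℝ, memDm a b N m c c' x' y' → x + y ≤ x' + y'

/-- The projection `D^m_x(c, C)` of `D^m(c, C)` to the first coordinate. -/
def Dmx (a b : ℕ → ℝ) (N : ℝ) (m : ℕ) (c C : ℝ) : Set ℝ :=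
  {x : ℝ | ∃ y : ℝ, memDm a b N m c C x y}

/-- The function `f(c̃) = sqrt((1 + c̃)/2 + sqrt(c̃²/4 + c̃))`. -/
def fval (c : ℝ) : ℝ := Real.sqrt ((1 + c) / 2 + Real.sqrt (c ^ 2 / 4 + c))

/-- `c̃ = (Σ b_i)² / (2 (Σ a_i)²)`. -/
def ctilde (ℓ : ℕ) (a b : ℕ → ℝ) : ℝ :=
  (∑ i ∈ Finset.Icc 1 ℓ, b i) ^ 2 / (2 * (∑ i ∈ Finset.Icc 1 ℓ, a i) ^ 2)

/-- The objective function `F` on `ℝ^{2ℓ}`. -/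
def Fobj (ℓ : ℕ) (a b x y : ℕ → ℝ) : ℝ :=
  (1 - ∑ i ∈ Finset.Icc 1 ℓ, (x i + y i)) *
  (1 - ∑ i ∈ Finset.Icc 1 ℓ, (y i + (a i) ^ 2 / (2 * x i) + (b i) ^ 2 / (2 * y i)))

/-- The late-expensive-obstacles assumption. -/
def LateExpensive (ℓ : ℕ) (a b : ℕ → ℝ) : Prop :=
  ∀ m, 1 ≤ m → m < ℓ →
    (∑ i ∈ Finset.Icc 1 m, b i) / (∑ i ∈ Finset.Icc 1 m, a i) <
      (∑ i ∈ Finset.Icc (m + 1) ℓ, b i) / (∑ i ∈ Finset.Icc (m + 1) ℓ, a i)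

/-- The ratio `(Σ_{j=p}^q b_j) / (Σ_{j=p}^q a_j)`. -/
def ratioBA (a b : ℕ → ℝ) (p q : ℕ) : ℝ :=
  (∑ j ∈ Finset.Icc p q, b j) / (∑ j ∈ Finset.Icc p q, a j)

/-- `u` (on indices `0, …, n+1`) is an admissible division into blocks. -/
def AdmissibleDiv (ℓ : ℕ) (a b : ℕ → ℝ) (n : ℕ) (u : ℕ → ℕ) : Prop :=
  u 0 = 0 ∧ u (n + 1) = ℓ ∧ (∀ i ≤ n, u i < u (i + 1)) ∧
  ∀ i ≤ n, ∀ m, u i < m → m < u (i + 1) →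
    ratioBA a b (u i + 1) m < ratioBA a b (m + 1) (u (i + 1))

/-- The canonical admissible division into blocks: the admissible division whose index
set is the intersection of the index sets of all admissible divisions into blocks. -/
def IsCanonicalDiv (ℓ : ℕ) (a b : ℕ → ℝ) (n : ℕ) (u : ℕ → ℕ) : Prop :=
  AdmissibleDiv ℓ a b n u ∧
  ∀ k, (∃ i ≤ n + 1, u i = k) ↔
    ∀ (n' : ℕ) (u' : ℕ → ℕ), AdmissibleDiv ℓ a b n' u' → ∃ i ≤ n' + 1, u' i = k

/-- The minimal time to cross one block with branching length `A` and obstacle length `B`. -/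
def blockTime (A B : ℝ) : ℝ :=
  A * fval (B ^ 2 / (2 * A ^ 2)) +
    B ^ 2 / (2 * A * (fval (B ^ 2 / (2 * A ^ 2)) - 1 / (2 * fval (B ^ 2 / (2 * A ^ 2)))))

/-- The total optimal time `T*` associated with a division into blocks. -/
def Tstar (a b : ℕ → ℝ) (n : ℕ) (u : ℕ → ℕ) : ℝ :=
  ∑ i ∈ Finset.range (n + 1),
    blockTime (∑ j ∈ Finset.Icc (u i + 1) (u (i + 1)), a j)
      (∑ j ∈ Finset.Icc (u i + 1) (u (i + 1)), b j)

/-- The coefficient appearing in the formula for the optimal `c_m`. -/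
def coefC (ℓ : ℕ) (a b : ℕ → ℝ) (m : ℕ) : ℝ :=
  ((∑ i ∈ Finset.Icc 1 m, a i) * (∑ i ∈ Finset.Icc (m + 1) ℓ, b i) -
    (∑ i ∈ Finset.Icc 1 m, b i) * (∑ i ∈ Finset.Icc (m + 1) ℓ, a i)) /
    (∑ i ∈ Finset.Icc 1 ℓ, b i)

/-- Block sum over `p < j ≤ q`. -/
def bsum (g : ℕ → ℝ) (p q : ℕ) : ℝ := ∑ j ∈ Finset.Icc (p + 1) q, g j

lemma bsum_add (g : ℕ → ℝ) {p m q : ℕ} (h1 : p ≤ m) (h2 : m ≤ q) :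
    bsum g p m + bsum g m q = bsum g p q := by
  unfold bsum
  simp only [Finset.Icc_add_one_left_eq_Ioc]
  exact Finset.sum_Ioc_consecutive g h1 h2

lemma bsum_pos (g : ℕ → ℝ) {l p q : ℕ} (hg : ∀ i ∈ Finset.Icc 1 l, 0 < g i)
    (h1 : p < q) (h2 : q ≤ l) : 0 < bsum g p q := by
  unfold bsum
  apply Finset.sum_pos
  · intro i hi
    apply hg
    simp only [Finset.mem_Icc] at hi ⊢
    omega
  · exact ⟨q, by simp only [Finset.mem_Icc]; omega⟩

lemma bsum_blocks (g : ℕ → ℝ) (u : ℕ → ℕ) (n : ℕ) (h0 : u 0 = 0)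
    (hu : ∀ i ≤ n, u i < u (i + 1)) :
    ∀ k ≤ n + 1, ∑ i ∈ Finset.range k, bsum g (u i) (u (i + 1)) = bsum g 0 (u k) := by
  intro k
  induction k with
  | zero => intro _; simp [h0, bsum]
  | succ k ih =>
    intro hk
    rw [Finset.sum_range_succ, ih (by omega)]
    exact bsum_add g (Nat.zero_le _) (hu k (by omega)).le

lemma u_lt (u : ℕ → ℕ) (n : ℕ) (hu : ∀ i ≤ n, u i < u (i + 1)) (i j : ℕ) (hij : i < j)
    (hj : j ≤ n + 1) : u i < u j := by
  induction j with
  | zero => omega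
  | succ j ih =>
    have h1 := hu j (by omega)
    rcases Nat.lt_or_ge i j with h | h
    · exact (ih h (by omega)).trans h1
    · have : i = j := by omega
      rw [this]; exact h1

lemma u_le (u : ℕ → ℕ) (n : ℕ) (hu : ∀ i ≤ n, u i < u (i + 1)) (i j : ℕ) (hij : i ≤ j)
    (hj : j ≤ n + 1) : u i ≤ u j := by
  rcases Nat.eq_or_lt_of_le hij with h | h
  · rw [h]
  · exact (u_lt u n hu i j h hj).le

lemma exists_block (u : ℕ → ℕ) (n : ℕ) (h0 : u 0 = 0) (j : ℕ) (hj : 0 < j)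
    (hj' : j ≤ u (n + 1)) : ∃ k ≤ n, u k < j ∧ j ≤ u (k + 1) := by
  induction n with
  | zero => exact ⟨0, le_rfl, by omega, hj'⟩
  | succ n ih =>
    by_cases h : j ≤ u (n + 1)
    · obtain ⟨k, hk, h'⟩ := ih h
      exact ⟨k, by omega, h'⟩
    · exact ⟨n + 1, le_rfl, by omega, hj'⟩

lemma exists_kappa (u : ℕ → ℕ) (n : ℕ) (hu : ∀ i ≤ n, u i < u (i + 1)) :
    ∃ κ : ℕ → ℕ, ∀ k ≤ n, ∀ j, u k < j → j ≤ u (k + 1) → κ j = k := by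
  classical
  refine ⟨fun j => if h : ∃ k ≤ n, u k < j ∧ j ≤ u (k + 1) then h.choose else 0, ?_⟩
  intro k hk j h1 h2
  have h : ∃ k ≤ n, u k < j ∧ j ≤ u (k + 1) := ⟨k, hk, h1, h2⟩
  simp only [h, dif_pos]
  obtain ⟨g1, g2, g3⟩ := h.choose_spec
  generalize h.choose = k' at *
  rcases lt_trichotomy k' k with hlt | heq | hgt
  · have := u_le u n hu (k' + 1) k (by omega) (by omega)
    omega
  · exact heq
  · have := u_le u n hu (k + 1) k' (by omega) (by omega)
    omega

lemma fval_spec {c : ℝ} (hc : 0 < c) :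
    0 < fval c ∧ 1 < 2 * fval c ^ 2 ∧
      (2 * fval c ^ 2 - 1) ^ 2 = 2 * c * (2 * fval c ^ 2 + 1) := by
  have hs : 0 ≤ c ^ 2 / 4 + c := by positivity
  have h1 := Real.sqrt_nonneg (c ^ 2 / 4 + c)
  have h2 := Real.sq_sqrt hs
  have h3 : fval c ^ 2 = (1 + c) / 2 + Real.sqrt (c ^ 2 / 4 + c) := by
    unfold fval
    exact Real.sq_sqrt (by positivity)
  refine ⟨?_, ?_, ?_⟩
  · unfold fval; positivity
  · rw [h3]; linarith
  · rw [h3]; nlinarith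

lemma fval_mono {c d : ℝ} (hc : 0 < c) (h : c ≤ d) : fval c ≤ fval d := by
  unfold fval
  gcongr

/-- Slope of the horizontal optimum. -/
def bf (A B : ℝ) : ℝ := fval (B ^ 2 / (2 * A ^ 2))

/-- Slope of the vertical optimum. -/
def bmu (A B : ℝ) : ℝ := B / (2 * A * (bf A B - 1 / (2 * bf A B)))

/-- Lagrange multiplier of a block. -/
def blam (A B : ℝ) : ℝ := 2 * bf A B ^ 2 / (2 * bf A B ^ 2 + 1)

lemma block_spec {A B : ℝ} (hA : 0 < A) (hB : 0 < B) :
    0 < bf A B ∧ 0 < bmu A B ∧ 0 < blam A B ∧ 0 < bf A B - 1 / (2 * bf A B) ∧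
    blockTime A B = A * bf A B + B * bmu A B ∧
    A * (bf A B - 1 / (2 * bf A B)) = B / (2 * bmu A B) ∧
    blam A B * (1 + 1 / (2 * bf A B ^ 2)) = 1 ∧ blam A B = 2 * bmu A B ^ 2 := by
  have hc : 0 < B ^ 2 / (2 * A ^ 2) := by positivity
  obtain ⟨h1, h2, h3⟩ := fval_spec hc
  have hbt : blockTime A B = A * bf A B + B * bmu A B := by
    unfold blockTime bmu bf; ring
  change 0 < bf A B at h1
  change 1 < 2 * bf A B ^ 2 at h2
  change (2 * bf A B ^ 2 - 1) ^ 2 = 2 * (B ^ 2 / (2 * A ^ 2)) * (2 * bf A B ^ 2 + 1) at h3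
  have hq : bf A B - 1 / (2 * bf A B) = (2 * bf A B ^ 2 - 1) / (2 * bf A B) := by
    field_simp
  have hq0 : 0 < bf A B - 1 / (2 * bf A B) := by
    rw [hq]; apply div_pos <;> linarith
  have hmu : 0 < bmu A B := by unfold bmu; positivity
  refine ⟨h1, hmu, by unfold blam; positivity, hq0, hbt, ?_, ?_, ?_⟩
  · unfold bmu
    field_simp
  · unfold blam
    field_simp
  · unfold blam bmu
    rw [hq]
    generalize bf A B = f at *
    have h4 : 0 < 2 * f ^ 2 - 1 := by linarith
    field_simp at h3 ⊢
    nlinarith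

lemma blam_mono {A B A' B' : ℝ} (hA : 0 < A) (hB : 0 < B) (hA' : 0 < A') (hB' : 0 < B')
    (h : B * A' ≤ B' * A) : blam A B ≤ blam A' B' := by
  have hr : B / A ≤ B' / A' := by rw [div_le_div_iff₀ hA hA']; exact h
  have hc : B ^ 2 / (2 * A ^ 2) ≤ B' ^ 2 / (2 * A' ^ 2) := by
    have e1 : B ^ 2 / (2 * A ^ 2) = (B / A) ^ 2 / 2 := by field_simp
    have e2 : B' ^ 2 / (2 * A' ^ 2) = (B' / A') ^ 2 / 2 := by field_simp
    rw [e1, e2]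
    gcongr
  have hf : bf A B ≤ bf A' B' := fval_mono (by positivity) hc
  have h0 := (block_spec hA hB).1
  have hf2 : bf A B ^ 2 ≤ bf A' B' ^ 2 := by gcongr
  unfold blam
  rw [div_le_div_iff₀ (by positivity) (by positivity)]
  nlinarith

lemma tangent {f mu lam a b x y : ℝ} (hf : 0 < f) (hmu : 0 < mu) (hlam : 0 < lam)
    (h1 : lam * (1 + 1 / (2 * f ^ 2)) = 1) (h2 : lam = 2 * mu ^ 2)
    (hx : 0 < x) (hy : 0 < y) :
    lam * (x - a ^ 2 / (2 * x) - b ^ 2 / (2 * y)) +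
      ((a * f + b * mu) - lam * (a * (f - 1 / (2 * f)) - b / (2 * mu))) ≤ x + y := by
  have hl1 : 1 - lam = lam / (2 * f ^ 2) := by
    have : lam * (1 + 1 / (2 * f ^ 2)) = lam + lam / (2 * f ^ 2) := by ring
    linarith
  have key1 : (1 - lam) * x + lam * a ^ 2 / (2 * x) -
      (a * f * (1 - lam) + lam * a / (2 * f)) = lam * (x - a * f) ^ 2 / (2 * x * f ^ 2) := by
    rw [hl1]
    field_simp
    ring
  have key2 : y + lam * b ^ 2 / (2 * y) - (b * mu + lam * b / (2 * mu)) =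
      (y - b * mu) ^ 2 / y := by
    rw [h2]
    field_simp
    ring
  have p1 : 0 ≤ lam * (x - a * f) ^ 2 / (2 * x * f ^ 2) := by positivity
  have p2 : 0 ≤ (y - b * mu) ^ 2 / y := by positivity
  have e : x + y - (lam * (x - a ^ 2 / (2 * x) - b ^ 2 / (2 * y)) +
      ((a * f + b * mu) - lam * (a * (f - 1 / (2 * f)) - b / (2 * mu)))) =
      ((1 - lam) * x + lam * a ^ 2 / (2 * x) - (a * f * (1 - lam) + lam * a / (2 * f))) +
      (y + lam * b ^ 2 / (2 * y) - (b * mu + lam * b / (2 * mu))) := by ring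
  rw [key1, key2] at e
  linarith

lemma ratio_lt {a b : ℕ → ℝ} {l p m q : ℕ} (ha : ∀ i ∈ Finset.Icc 1 l, 0 < a i)
    (h1 : p < m) (h2 : m < q) (h3 : q ≤ l) :
    ratioBA a b (p + 1) m < ratioBA a b (m + 1) q ↔
      bsum b p m * bsum a m q < bsum b m q * bsum a p m := by
  have e1 := bsum_pos a ha h1 (by omega)
  have e2 := bsum_pos a ha h2 h3
  unfold ratioBA
  exact div_lt_div_iff₀ e1 e2

lemma canon_mono (ℓ : ℕ) (a b : ℕ → ℝ)
    (ha : ∀ i ∈ Finset.Icc 1 ℓ, 0 < a i) (hb : ∀ i ∈ Finset.Icc 1 ℓ, 0 < b i)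
    (n : ℕ) (u : ℕ → ℕ) (hcanon : IsCanonicalDiv ℓ a b n u) (k : ℕ) (hk : k < n) :
    bsum b (u (k + 1)) (u (k + 2)) * bsum a (u k) (u (k + 1)) ≤
      bsum b (u k) (u (k + 1)) * bsum a (u (k + 1)) (u (k + 2)) := by
  obtain ⟨⟨h0, hend, hu, hadm⟩, hcan⟩ := hcanon
  by_contra! hlt
  have hle : ∀ i ≤ n + 1, u i ≤ ℓ := fun i hi => by
    rw [← hend]; exact u_le u n hu i (n + 1) hi le_rfl
  have hk1 := hu k (by omega)
  have hk2 : u (k + 1) < u (k + 2) := hu (k + 1) (by omega)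
  have hl2 := hle (k + 2) (by omega)
  have hA := bsum_pos a ha hk1 (by omega)
  have hA3 := bsum_pos a ha hk2 hl2
  have hB := bsum_pos b hb hk1 (by omega)
  have hB3 := bsum_pos b hb hk2 hl2
  have hnew : AdmissibleDiv ℓ a b (n - 1) (fun i => if i ≤ k then u i else u (i + 1)) := by
    refine ⟨by simp [h0], ?_, ?_, ?_⟩
    · have e : n - 1 + 1 = n := by omega
      simp only [e]
      rw [if_neg (by omega), hend]
    · intro i hi
      rcases lt_trichotomy i k with h | h | h
      · simp only [if_pos h.le, if_pos (show i + 1 ≤ k by omega)]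
        exact hu i (by omega)
      · subst h
        simp only [le_refl, if_true, if_neg (show ¬ (i + 1 ≤ i) by omega)]
        exact hk1.trans hk2
      · simp only [if_neg (show ¬ (i ≤ k) by omega), if_neg (show ¬ (i + 1 ≤ k) by omega)]
        exact hu (i + 1) (by omega)
    · intro i hi
      rcases lt_trichotomy i k with h | h | h
      · simp only [if_pos h.le, if_pos (show i + 1 ≤ k by omega)]
        exact hadm i (by omega)
      · subst h
        simp only [le_refl, if_true, if_neg (show ¬ (i + 1 ≤ i) by omega)]
        intro m hm1 hm2
        change m < u (i + 2) at hm2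
        change ratioBA a b (u i + 1) m < ratioBA a b (m + 1) (u (i + 2))
        rw [ratio_lt ha hm1 hm2 hl2]
        rcases lt_trichotomy m (u (i + 1)) with hm | hm | hm
        · have h1 := hadm i (by omega) m hm1 hm
          rw [ratio_lt ha hm1 hm (by omega)] at h1
          have ea := bsum_add a hm1.le hm.le
          have eb := bsum_add b hm1.le hm.le
          have ea' := bsum_add a hm.le hk2.le
          have eb' := bsum_add b hm.le hk2.le
          have pa := bsum_pos a ha hm1 (by omega)
          rw [← ea, ← eb] at hlt
          rw [← ea] at hA
          rw [← ea', ← eb']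
          generalize bsum a (u i) m = A1 at *
          generalize bsum b (u i) m = B1 at *
          generalize bsum a m (u (i + 1)) = A2 at *
          generalize bsum b m (u (i + 1)) = B2 at *
          generalize bsum a (u (i + 1)) (u (i + 2)) = A3 at *
          generalize bsum b (u (i + 1)) (u (i + 2)) = B3 at *
          have t1 : (B1 * A3) * (A1 + A2) < (B3 * A1) * (A1 + A2) := by
            have := mul_lt_mul_of_pos_right hlt pa
            have := mul_lt_mul_of_pos_right h1 hA3
            nlinarith
          have t2 := lt_of_mul_lt_mul_right t1 hA.le
          linarith
        · subst hm
          exact hlt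
        · have h1 := hadm (i + 1) (by omega) m hm hm2
          rw [ratio_lt ha hm hm2 hl2] at h1
          have ea := bsum_add a hm.le hm2.le
          have eb := bsum_add b hm.le hm2.le
          have ea' := bsum_add a hk1.le hm.le
          have eb' := bsum_add b hk1.le hm.le
          have pa := bsum_pos a ha hm2 hl2
          rw [← ea, ← eb] at hlt
          rw [← ea] at hA3
          rw [← ea', ← eb']
          generalize bsum a (u i) (u (i + 1)) = A1 at *
          generalize bsum b (u i) (u (i + 1)) = B1 at *
          generalize bsum a (u (i + 1)) m = A2 at *
          generalize bsum b (u (i + 1)) m = B2 at *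
          generalize bsum a m (u (i + 2)) = A3 at *
          generalize bsum b m (u (i + 2)) = B3 at *
          have t1 : (B1 * A3) * (A2 + A3) < (B3 * A1) * (A2 + A3) := by
            have := mul_lt_mul_of_pos_right hlt pa
            have := mul_lt_mul_of_pos_right h1 hA
            nlinarith
          have t2 := lt_of_mul_lt_mul_right t1 hA3.le
          linarith
      · simp only [if_neg (show ¬ (i ≤ k) by omega), if_neg (show ¬ (i + 1 ≤ k) by omega)]
        exact hadm (i + 1) (by omega)
  obtain ⟨i, hi, hiu⟩ := (hcan (u (k + 1))).1 ⟨k + 1, by omega, rfl⟩ _ _ hnew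
  by_cases hik : i ≤ k
  · simp only [if_pos hik] at hiu
    have := u_lt u n hu i (k + 1) (by omega) (by omega)
    omega
  · simp only [if_neg hik] at hiu
    have := u_lt u n hu (k + 1) (i + 1) (by omega) (by omega)
    omega

lemma abel_nonneg (lam H : ℕ → ℝ) (n : ℕ) (hl : ∀ k ≤ n, 0 ≤ lam k)
    (hmono : ∀ k < n, lam (k + 1) ≤ lam k)
    (hS : ∀ k ≤ n + 1, 0 ≤ ∑ i ∈ Finset.range k, H i) :
    0 ≤ ∑ i ∈ Finset.range (n + 1), lam i * H i := by
  have key : ∀ k ≤ n, lam k * ∑ i ∈ Finset.range (k + 1), H i ≤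
      ∑ i ∈ Finset.range (k + 1), lam i * H i := by
    intro k
    induction k with
    | zero => intro _; simp
    | succ k ih =>
      intro hk
      have h1 := ih (by omega)
      have h2 := mul_le_mul_of_nonneg_right (hmono k (by omega)) (hS (k + 1) (by omega))
      rw [Finset.sum_range_succ, Finset.sum_range_succ (fun i => lam i * H i) (k + 1), mul_add]
      linarith
  exact (mul_nonneg (hl n le_rfl) (hS (n + 1) le_rfl)).trans (key n le_rfl)

lemma forward (ℓ : ℕ) (a b : ℕ → ℝ)
    (ha : ∀ i ∈ Finset.Icc 1 ℓ, 0 < a i) (hb : ∀ i ∈ Finset.Icc 1 ℓ, 0 < b i)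
    (n : ℕ) (u : ℕ → ℕ) (hcanon : IsCanonicalDiv ℓ a b n u) (x y : ℕ → ℝ)
    (h : memD ℓ a b x y) : Tstar a b n u ≤ 1 := by
  have hmono := canon_mono ℓ a b ha hb n u hcanon
  obtain ⟨⟨h0, hend, hu, hadm⟩, -⟩ := hcanon
  obtain ⟨hpos, hsum, hpre⟩ := h
  have hle : ∀ i ≤ n + 1, u i ≤ ℓ := fun i hi => by
    rw [← hend]; exact u_le u n hu i (n + 1) hi le_rfl
  have hAp : ∀ k ≤ n, 0 < bsum a (u k) (u (k + 1)) := fun k hk =>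
    bsum_pos a ha (hu k hk) (hle _ (by omega))
  have hBp : ∀ k ≤ n, 0 < bsum b (u k) (u (k + 1)) := fun k hk =>
    bsum_pos b hb (hu k hk) (hle _ (by omega))
  set hh : ℕ → ℝ := fun i => x i - (a i) ^ 2 / (2 * x i) - (b i) ^ 2 / (2 * y i) with hhdef
  set L : ℕ → ℝ := fun k => blam (bsum a (u k) (u (k + 1))) (bsum b (u k) (u (k + 1))) with hL
  have hblock : ∀ k ≤ n, L k * bsum hh (u k) (u (k + 1)) +
      blockTime (bsum a (u k) (u (k + 1))) (bsum b (u k) (u (k + 1))) ≤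
      bsum (fun i => x i + y i) (u k) (u (k + 1)) := by
    intro k hk
    obtain ⟨s1, s2, s3, s4, s5, s6, s7, s8⟩ := block_spec (hAp k hk) (hBp k hk)
    rw [s5]
    have hk' := hle (k + 1) (by omega)
    have hsumle := Finset.sum_le_sum (s := Finset.Icc (u k + 1) (u (k + 1))) (fun i hi =>
      have hi' : i ∈ Finset.Icc 1 ℓ := by simp only [Finset.mem_Icc] at hi ⊢; omega
      tangent (a := a i) (b := b i) s1 s2 s3 s7 s8 (hpos i hi').1 (hpos i hi').2)
    simp only [hL]
    generalize bf (bsum a (u k) (u (k + 1))) (bsum b (u k) (u (k + 1))) = f at *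
    generalize bmu (bsum a (u k) (u (k + 1))) (bsum b (u k) (u (k + 1))) = mu at *
    generalize blam (bsum a (u k) (u (k + 1))) (bsum b (u k) (u (k + 1))) = lam at *
    refine le_trans (le_of_eq ?_) hsumle
    have E : ∑ i ∈ Finset.Icc (u k + 1) (u (k + 1)), (a i * (f - 1 / (2 * f)) - b i / (2 * mu)) =
        bsum a (u k) (u (k + 1)) * (f - 1 / (2 * f)) - bsum b (u k) (u (k + 1)) / (2 * mu) := by
      unfold bsum
      rw [Finset.sum_sub_distrib, ← Finset.sum_mul, ← Finset.sum_div]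
    rw [Finset.sum_add_distrib, Finset.sum_sub_distrib, ← Finset.mul_sum, ← Finset.mul_sum, E,
      Finset.sum_add_distrib, ← Finset.sum_mul, ← Finset.sum_mul]
    change _ = lam * bsum hh (u k) (u (k + 1)) + (bsum a (u k) (u (k + 1)) * f +
      bsum b (u k) (u (k + 1)) * mu - lam * (bsum a (u k) (u (k + 1)) * (f - 1 / (2 * f)) -
      bsum b (u k) (u (k + 1)) / (2 * mu)))
    rw [s6]
    ring
  have hAbel : 0 ≤ ∑ i ∈ Finset.range (n + 1), L i * bsum hh (u i) (u (i + 1)) := by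
    apply abel_nonneg
    · intro k hk
      exact (block_spec (hAp k hk) (hBp k hk)).2.2.1.le
    · intro k hk
      exact blam_mono (hAp _ (by omega)) (hBp _ (by omega)) (hAp _ (by omega)) (hBp _ (by omega))
        (hmono k hk)
    · intro k hk
      rw [bsum_blocks hh u n h0 hu k hk]
      rcases Nat.eq_zero_or_pos (u k) with hz | hz
      · rw [hz]; simp [bsum]
      · exact hpre (u k) (by simp only [Finset.mem_Icc]; exact ⟨hz, hle k hk⟩)
  have htot := Finset.sum_le_sum (s := Finset.range (n + 1)) (fun k hk =>
    hblock k (by simp only [Finset.mem_range] at hk; omega))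
  rw [Finset.sum_add_distrib, bsum_blocks _ u n h0 hu (n + 1) le_rfl, hend] at htot
  change _ + Tstar a b n u ≤ ∑ i ∈ Finset.Icc 1 ℓ, (x i + y i) at htot
  linarith

lemma backward (ℓ : ℕ) (a b : ℕ → ℝ)
    (ha : ∀ i ∈ Finset.Icc 1 ℓ, 0 < a i) (hb : ∀ i ∈ Finset.Icc 1 ℓ, 0 < b i)
    (n : ℕ) (u : ℕ → ℕ) (hdiv : AdmissibleDiv ℓ a b n u) (hT : Tstar a b n u ≤ 1) :
    ∃ x y : ℕ → ℝ, memDhat ℓ a b x y := by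
  obtain ⟨h0, hend, hu, hadm⟩ := hdiv
  have hle : ∀ i ≤ n + 1, u i ≤ ℓ := fun i hi => by
    rw [← hend]; exact u_le u n hu i (n + 1) hi le_rfl
  have hAp : ∀ k ≤ n, 0 < bsum a (u k) (u (k + 1)) := fun k hk =>
    bsum_pos a ha (hu k hk) (hle _ (by omega))
  have hBp : ∀ k ≤ n, 0 < bsum b (u k) (u (k + 1)) := fun k hk =>
    bsum_pos b hb (hu k hk) (hle _ (by omega))
  obtain ⟨κ, hκ⟩ := exists_kappa u n hu
  set F : ℕ → ℝ := fun k => bf (bsum a (u k) (u (k + 1))) (bsum b (u k) (u (k + 1))) with hF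
  set M : ℕ → ℝ := fun k => bmu (bsum a (u k) (u (k + 1))) (bsum b (u k) (u (k + 1))) with hM
  set x : ℕ → ℝ := fun j => a j * F (κ j) with hx
  set y : ℕ → ℝ := fun j => b j * M (κ j) with hy
  set hh : ℕ → ℝ := fun i => x i - (a i) ^ 2 / (2 * x i) - (b i) ^ 2 / (2 * y i) with hhdef
  have hFM : ∀ k ≤ n, 0 < F k ∧ 0 < M k := fun k hk =>
    ⟨(block_spec (hAp k hk) (hBp k hk)).1, (block_spec (hAp k hk) (hBp k hk)).2.1⟩
  have hpart : ∀ k ≤ n, ∀ m ≤ u (k + 1), bsum hh (u k) m =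
      bsum a (u k) m * (F k - 1 / (2 * F k)) - bsum b (u k) m / (2 * M k) := by
    intro k hk m hm
    unfold bsum
    rw [Finset.sum_mul, Finset.sum_div, ← Finset.sum_sub_distrib]
    apply Finset.sum_congr rfl
    intro j hj
    simp only [Finset.mem_Icc] at hj
    have hl := hle (k + 1) (by omega)
    have hj' : j ∈ Finset.Icc 1 ℓ := by simp only [Finset.mem_Icc]; omega
    have e := hκ k hk j (by omega) (by omega)
    have p1 := ha j hj'
    have p2 := hb j hj'
    obtain ⟨p3, p4⟩ := hFM k hk
    simp only [hhdef, hx, hy, e]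
    generalize F k = f at *
    generalize M k = mu at *
    field_simp
  have hfull : ∀ k ≤ n, bsum hh (u k) (u (k + 1)) = 0 := by
    intro k hk
    rw [hpart k hk _ le_rfl]
    have := (block_spec (hAp k hk) (hBp k hk)).2.2.2.2.2.1
    simp only [hF, hM]
    linarith
  have hzero : ∀ k ≤ n + 1, bsum hh 0 (u k) = 0 := by
    intro k hk
    rw [← bsum_blocks hh u n h0 hu k hk]
    apply Finset.sum_eq_zero
    intro i hi
    simp only [Finset.mem_range] at hi
    exact hfull i (by omega)
  have htime : ∑ i ∈ Finset.Icc 1 ℓ, (x i + y i) = Tstar a b n u := by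
    have e := bsum_blocks (fun i => x i + y i) u n h0 hu (n + 1) le_rfl
    rw [hend] at e
    refine Eq.trans e.symm ?_
    unfold Tstar
    apply Finset.sum_congr rfl
    intro k hk
    simp only [Finset.mem_range] at hk
    have s5 := (block_spec (hAp k (by omega)) (hBp k (by omega))).2.2.2.2.1
    refine Eq.trans ?_ s5.symm
    change _ = bsum a (u k) (u (k + 1)) * F k + bsum b (u k) (u (k + 1)) * M k
    unfold bsum
    rw [Finset.sum_mul, Finset.sum_mul, ← Finset.sum_add_distrib]
    apply Finset.sum_congr rfl
    intro j hj
    simp only [Finset.mem_Icc] at hj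
    simp only [hx, hy, hκ k (by omega) j (by omega) (by omega)]
  refine ⟨x, y, ⟨?_, ?_, ?_⟩, ?_⟩
  · intro i hi
    have hi2 := hi
    simp only [Finset.mem_Icc] at hi2
    obtain ⟨k, hk, k1, k2⟩ := exists_block u n h0 i (by omega) (by omega)
    obtain ⟨p3, p4⟩ := hFM k hk
    simp only [hx, hy, hκ k hk i k1 k2]
    exact ⟨mul_pos (ha i hi) p3, mul_pos (hb i hi) p4⟩
  · rw [htime]; exact hT
  · intro m hm
    simp only [Finset.mem_Icc] at hm
    obtain ⟨k, hk, k1, k2⟩ := exists_block u n h0 m (by omega) (by omega)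
    change 0 ≤ bsum hh 0 m
    rw [← bsum_add hh (Nat.zero_le (u k)) k1.le, hzero k (by omega), zero_add]
    rcases Nat.eq_or_lt_of_le k2 with hm' | hm'
    · rw [hm', hfull k hk]
    · have hl := hle (k + 1) (by omega)
      have h1 := hadm k hk m k1 hm'
      rw [ratio_lt ha k1 hm' hl] at h1
      have ea := bsum_add a k1.le hm'.le
      have eb := bsum_add b k1.le hm'.le
      have hB := hBp k hk
      obtain ⟨-, -, -, s4, -, s6, -, -⟩ := block_spec (hAp k hk) (hBp k hk)
      change 0 < F k - 1 / (2 * F k) at s4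
      change bsum a (u k) (u (k + 1)) * (F k - 1 / (2 * F k)) =
        bsum b (u k) (u (k + 1)) / (2 * M k) at s6
      rw [hpart k hk m k2]
      have p4 := (hFM k hk).2
      have hcross : bsum b (u k) m * bsum a (u k) (u (k + 1)) ≤
          bsum b (u k) (u (k + 1)) * bsum a (u k) m := by
        rw [← ea, ← eb]; nlinarith
      generalize F k - 1 / (2 * F k) = q at *
      rw [div_eq_mul_inv] at s6 ⊢
      generalize (2 * M k)⁻¹ = t at *
      have := mul_le_mul_of_nonneg_right hcross s4.le
      have t1 : (bsum b (u k) m * t) * bsum b (u k) (u (k + 1)) ≤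
          (bsum a (u k) m * q) * bsum b (u k) (u (k + 1)) := by
        calc (bsum b (u k) m * t) * bsum b (u k) (u (k + 1))
            = bsum b (u k) m * (bsum b (u k) (u (k + 1)) * t) := by ring
          _ = bsum b (u k) m * bsum a (u k) (u (k + 1)) * q := by rw [← s6]; ring
          _ ≤ _ := this
          _ = _ := by ring
      have := le_of_mul_le_mul_right t1 hB
      linarith
  · have := hzero (n + 1) le_rfl
    rw [hend] at this
    exact this

/-- `D̂` is nonempty iff `T* ≤ 1`, where `T*` is the total optimal time of the
canonical admissible division into blocks. -/
theorem Dhat_nonempty_iff_general (ℓ : ℕ) (hℓ : 1 ≤ ℓ) (a b : ℕ → ℝ)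
    (ha : ∀ i ∈ Finset.Icc 1 ℓ, 0 < a i) (hb : ∀ i ∈ Finset.Icc 1 ℓ, 0 < b i)
    (nstar : ℕ) (ustar : ℕ → ℕ) (hcanon : IsCanonicalDiv ℓ a b nstar ustar) :
    (∃ x y : ℕ → ℝ, memDhat ℓ a b x y) ↔ Tstar a b nstar ustar ≤ 1 := by
  constructor
  · rintro ⟨x, y, h, -⟩
    exact forward ℓ a b ha hb nstar ustar hcanon x y h
  · exact backward ℓ a b ha hb nstar ustar hcanon.1
end
end

section
/- The domain D̂ is nonempty if and only if D is nonempty. Moreover, if D is nonempty, then T* ≤ Σ_{i=1}^ℓ (x_i + y_i) for every (x_1,y_1,…,x_ℓ,y_ℓ) ∈ D. -/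
open Finset

noncomputable section

/-! ### Helper lemmas -/

lemma hp_sum_Icc (g : ℕ → ℝ) {p q : ℕ} (h : p ≤ q) :
    ∑ j ∈ Finset.Icc (p + 1) q, g j
      = ∑ j ∈ Finset.Icc 1 q, g j - ∑ j ∈ Finset.Icc 1 p, g j := by
  have e : ∀ r s : ℕ, Finset.Icc (r + 1) s = Finset.Ioc r s := by
    intro r s; ext; simp [Nat.succ_le_iff]
  have e0 : ∀ s : ℕ, Finset.Icc 1 s = Finset.Ioc 0 s := fun s => e 0 s
  rw [e, e0, e0, ← Finset.sum_Ioc_consecutive g (Nat.zero_le p) h]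
  ring

lemma hp_fval (c : ℝ) (hc : 0 < c) :
    0 < fval c ∧ 1 < 2 * fval c ^ 2 ∧
      (2 * fval c ^ 2 - 1) ^ 2 = 2 * c * (1 + 2 * fval c ^ 2) := by
  have h0 : 0 ≤ c ^ 2 / 4 + c := by positivity
  have ht := Real.sqrt_nonneg (c ^ 2 / 4 + c)
  have hts := Real.sq_sqrt h0
  have hpos : 0 < (1 + c) / 2 + Real.sqrt (c ^ 2 / 4 + c) := by linarith
  have hs : fval c ^ 2 = (1 + c) / 2 + Real.sqrt (c ^ 2 / 4 + c) := Real.sq_sqrt hpos.le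
  refine ⟨Real.sqrt_pos.2 hpos, by rw [hs]; linarith, ?_⟩
  rw [hs]
  set t := Real.sqrt (c ^ 2 / 4 + c)
  linear_combination 4 * hts

lemma hp_fval_mono {c d : ℝ} (hc : 0 ≤ c) (h : c ≤ d) : fval c ≤ fval d := by
  unfold fval
  gcongr

/-- The multiplier attached to a ratio. -/
def hpLam (f : ℝ) : ℝ := 1 - 1 / (1 + 2 * f ^ 2)

lemma hp_point (f k a b x y : ℝ) (hk : k ^ 2 * (1 + 2 * f ^ 2) = f ^ 2)
    (hx : 0 < x) (hy : 0 < y) :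
    2 * f / (1 + 2 * f ^ 2) * a + 2 * k * b + hpLam f * (x - a ^ 2 / (2 * x) - b ^ 2 / (2 * y))
      ≤ x + y := by
  have hw : 0 < 1 + 2 * f ^ 2 := by positivity
  have hL : hpLam f = 2 * k ^ 2 := by
    unfold hpLam; field_simp; linarith
  have h1 : x + y - (2 * f / (1 + 2 * f ^ 2) * a + 2 * k * b +
      hpLam f * (x - a ^ 2 / (2 * x) - b ^ 2 / (2 * y)))
      = (x - f * a) ^ 2 / (x * (1 + 2 * f ^ 2)) + (y - k * b) ^ 2 / y := by
    have e1 : x + y - (2 * f / (1 + 2 * f ^ 2) * a + 2 * k * b +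
      hpLam f * (x - a ^ 2 / (2 * x) - b ^ 2 / (2 * y)))
      = (x - 2 * f / (1 + 2 * f ^ 2) * a - hpLam f * (x - a ^ 2 / (2 * x)))
        + (y - 2 * k * b + hpLam f * (b ^ 2 / (2 * y))) := by ring
    rw [e1]
    congr 1
    · unfold hpLam; field_simp; ring
    · rw [hL]; field_simp; ring
  have h2 : 0 ≤ (x - f * a) ^ 2 / (x * (1 + 2 * f ^ 2)) + (y - k * b) ^ 2 / y := by positivity
  linarith

lemma hp_block (s : Finset ℕ) (a b x y : ℕ → ℝ) (hs : s.Nonempty)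
    (ha : ∀ i ∈ s, 0 < a i) (hb : ∀ i ∈ s, 0 < b i) (hxy : ∀ i ∈ s, 0 < x i ∧ 0 < y i) :
    blockTime (∑ j ∈ s, a j) (∑ j ∈ s, b j)
      + hpLam (fval ((∑ j ∈ s, b j) ^ 2 / (2 * (∑ j ∈ s, a j) ^ 2)))
        * ∑ j ∈ s, (x j - (a j) ^ 2 / (2 * x j) - (b j) ^ 2 / (2 * y j))
      ≤ ∑ j ∈ s, (x j + y j) := by
  have hA : 0 < ∑ j ∈ s, a j := Finset.sum_pos ha hs
  have hB : 0 < ∑ j ∈ s, b j := Finset.sum_pos hb hs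
  unfold blockTime
  set A := ∑ j ∈ s, a j with hAdef
  set B := ∑ j ∈ s, b j with hBdef
  have hc : 0 < B ^ 2 / (2 * A ^ 2) := by positivity
  obtain ⟨hf, hf1, hf2⟩ := hp_fval _ hc
  set f := fval (B ^ 2 / (2 * A ^ 2))
  have hd : 0 < 2 * f ^ 2 - 1 := by linarith
  have hf3 : A ^ 2 * (2 * f ^ 2 - 1) ^ 2 = B ^ 2 * (1 + 2 * f ^ 2) := by
    rw [hf2]; field_simp
  set k := B * f / (A * (2 * f ^ 2 - 1)) with hk
  have hk2 : k ^ 2 * (1 + 2 * f ^ 2) = f ^ 2 := by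
    rw [hk, div_pow, div_mul_eq_mul_div, div_eq_iff (by positivity)]
    linear_combination (-f ^ 2) * hf3
  have hsum := Finset.sum_le_sum (fun i hi => hp_point f k (a i) (b i) (x i) (y i) hk2
    (hxy i hi).1 (hxy i hi).2)
  rw [Finset.sum_add_distrib, Finset.sum_add_distrib, ← Finset.mul_sum, ← Finset.mul_sum,
    ← Finset.mul_sum, ← hAdef, ← hBdef] at hsum
  have e2 : B ^ 2 / (2 * A * (f - 1 / (2 * f))) = B * k := by
    have : f - 1 / (2 * f) = (2 * f ^ 2 - 1) / (2 * f) := by field_simp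
    rw [this, hk]; field_simp
  have e3 : 2 * f / (1 + 2 * f ^ 2) * A + 2 * k * B = A * f + B * k := by
    have hw : 0 < 1 + 2 * f ^ 2 := by positivity
    have : B * k = A * f * (2 * f ^ 2 - 1) / (1 + 2 * f ^ 2) := by
      rw [hk, eq_div_iff hw.ne', mul_div_assoc', div_mul_eq_mul_div, div_eq_iff (by positivity)]
      linear_combination (-f) * hf3
    have h2 : 2 * k * B = 2 * (B * k) := by ring
    rw [h2, this]; field_simp; ring
  rw [e2]
  linarith

lemma hp_lam_nonneg (f : ℝ) : 0 ≤ hpLam f := by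
  unfold hpLam
  have : 1 / (1 + 2 * f ^ 2) ≤ 1 := by
    rw [div_le_one (by positivity)]; nlinarith [sq_nonneg f]
  linarith

lemma hp_lam_mono {f g : ℝ} (hf : 0 ≤ f) (h : f ≤ g) : hpLam f ≤ hpLam g := by
  unfold hpLam
  gcongr

lemma hp_abel (n : ℕ) (L G : ℕ → ℝ) (hL : ∀ i ≤ n, 0 ≤ L i)
    (hLm : ∀ i < n, L (i + 1) ≤ L i) (h0 : G 0 = 0) (hG : ∀ i ≤ n + 1, 0 ≤ G i) :
    ∀ k ≤ n, L k * G (k + 1) ≤ ∑ i ∈ Finset.range (k + 1), L i * (G (i + 1) - G i) := by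
  intro k
  induction k with
  | zero => intro _; simp [h0]
  | succ k ih =>
    intro hk
    have h1 := ih (by omega)
    rw [Finset.sum_range_succ]
    have h2 := mul_le_mul_of_nonneg_right (hLm k (by omega)) (hG (k + 1) (by omega))
    linarith

lemma hp_umono {n : ℕ} {u : ℕ → ℕ} (h : ∀ i ≤ n, u i < u (i + 1)) :
    ∀ j i, i < j → j ≤ n + 1 → u i < u j := by
  intro j
  induction j with
  | zero => intro i hi; omega
  | succ j ih =>
    intro i hi hj
    have h1 := h j (by omega)
    rcases Nat.lt_succ_iff_lt_or_eq.1 hi with h2 | h2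
    · exact (ih i h2 (by omega)).trans h1
    · subst h2; exact h1

/-- Merging criterion. -/
lemma hp_merge {ℓ : ℕ} {a b : ℕ → ℝ}
    (ha : ∀ i ∈ Finset.Icc 1 ℓ, 0 < a i) (p t q : ℕ) (hpt : p < t) (htq : t < q) (hq : q ≤ ℓ)
    (h1 : ∀ m, p < m → m < t → ratioBA a b (p + 1) m < ratioBA a b (m + 1) t)
    (h2 : ∀ m, t < m → m < q → ratioBA a b (t + 1) m < ratioBA a b (m + 1) q)
    (h : ratioBA a b (p + 1) t < ratioBA a b (t + 1) q) :
    ∀ m, p < m → m < q → ratioBA a b (p + 1) m < ratioBA a b (m + 1) q := by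
  intro m hpm hmq
  have pos : ∀ r s, r < s → s ≤ ℓ → 0 < ∑ j ∈ Finset.Icc (r + 1) s, a j := by
    intro r s hrs hs
    apply Finset.sum_pos
    · intro i hi
      rw [Finset.mem_Icc] at hi
      exact ha i (Finset.mem_Icc.2 ⟨by omega, by omega⟩)
    · exact ⟨s, Finset.mem_Icc.2 ⟨by omega, le_refl _⟩⟩
  have split : ∀ (g : ℕ → ℝ) (r s v : ℕ), r ≤ s → s ≤ v →
      ∑ j ∈ Finset.Icc (r + 1) v, g j
        = ∑ j ∈ Finset.Icc (r + 1) s, g j + ∑ j ∈ Finset.Icc (s + 1) v, g j := by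
    intro g r s v hrs hsv
    rw [hp_sum_Icc g hrs, hp_sum_Icc g hsv, hp_sum_Icc g (hrs.trans hsv)]; ring
  unfold ratioBA at *
  rcases lt_trichotomy m t with hmt | hmt | hmt
  · have e1 := h1 m hpm hmt
    have P1 := pos p m hpm (by omega)
    have P2 := pos m t hmt (by omega)
    have P3 := pos t q htq hq
    rw [split a p m t (by omega) (by omega), split b p m t (by omega) (by omega)] at h
    rw [split a m t q (by omega) (by omega), split b m t q (by omega) (by omega)]
    generalize ∑ j ∈ Finset.Icc (p + 1) m, a j = A1 at *
    generalize ∑ j ∈ Finset.Icc (p + 1) m, b j = B1 at *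
    generalize ∑ j ∈ Finset.Icc (m + 1) t, a j = A2 at *
    generalize ∑ j ∈ Finset.Icc (m + 1) t, b j = B2 at *
    generalize ∑ j ∈ Finset.Icc (t + 1) q, a j = A3 at *
    generalize ∑ j ∈ Finset.Icc (t + 1) q, b j = B3 at *
    have e2 : B1 / A1 < (B1 + B2) / (A1 + A2) := by
      rw [div_lt_div_iff₀ P1 P2] at e1
      rw [div_lt_div_iff₀ P1 (by positivity)]
      linarith
    have e3 := e2.trans h
    rw [div_lt_div_iff₀ P1 (by positivity)] at e1 e3 ⊢
    linarith
  · subst hmt; exact h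
  · have e1 := h2 m hmt hmq
    have P1 := pos p t hpt (by omega)
    have P2 := pos t m hmt (by omega)
    have P3 := pos m q hmq hq
    rw [split a t m q (by omega) (by omega), split b t m q (by omega) (by omega)] at h
    rw [split a p t m (by omega) (by omega), split b p t m (by omega) (by omega)]
    generalize ∑ j ∈ Finset.Icc (p + 1) t, a j = A1 at *
    generalize ∑ j ∈ Finset.Icc (p + 1) t, b j = B1 at *
    generalize ∑ j ∈ Finset.Icc (t + 1) m, a j = A2 at *
    generalize ∑ j ∈ Finset.Icc (t + 1) m, b j = B2 at *
    generalize ∑ j ∈ Finset.Icc (m + 1) q, a j = A3 at *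
    generalize ∑ j ∈ Finset.Icc (m + 1) q, b j = B3 at *
    have e2 : (B2 + B3) / (A2 + A3) < B3 / A3 := by
      rw [div_lt_div_iff₀ P2 P3] at e1
      rw [div_lt_div_iff₀ (by positivity) P3]
      linarith
    have e3 := h.trans e2
    rw [div_lt_div_iff₀ (by positivity) P3] at e1 e3 ⊢
    linarith

lemma hp_ratio_anti {ℓ : ℕ} {a b : ℕ → ℝ}
    (ha : ∀ i ∈ Finset.Icc 1 ℓ, 0 < a i) {n : ℕ} {u : ℕ → ℕ}
    (hcanon : IsCanonicalDiv ℓ a b n u) :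
    ∀ i < n, ratioBA a b (u (i + 1) + 1) (u (i + 2)) ≤ ratioBA a b (u i + 1) (u (i + 1)) := by
  intro i hi
  by_contra hcon
  push Not at hcon
  obtain ⟨⟨h0, hend, hlt, hadm⟩, hmin⟩ := hcanon
  have hmono := hp_umono hlt
  have hle : u (i + 2) ≤ ℓ := by
    rcases Nat.lt_or_ge (i + 2) (n + 1) with h | h
    · rw [← hend]; exact (hmono _ _ h le_rfl).le
    · have : i + 2 = n + 1 := by omega
      rw [this, hend]
  have hmerge := hp_merge ha (u i) (u (i + 1)) (u (i + 2)) (hlt i (by omega))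
    (hlt (i + 1) (by omega)) hle (hadm i (by omega)) (hadm (i + 1) (by omega)) hcon
  have key := (hmin (u (i + 1))).1 ⟨i + 1, by omega, rfl⟩ (n - 1)
    (fun k => if k ≤ i then u k else u (k + 1)) ?_
  · obtain ⟨k, hk, hke⟩ := key
    split_ifs at hke with hki
    · have := hmono (i + 1) k (by omega) (by omega)
      omega
    · have := hmono (k + 1) (i + 1) (by omega) (by omega)
      omega
  · refine ⟨by simp [h0], ?_, ?_, ?_⟩
    · have e : n - 1 + 1 = n := by omega
      dsimp only
      rw [e, if_neg (by omega), hend]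
    · intro k hk
      dsimp only
      rcases lt_trichotomy k i with h | h | h
      · rw [if_pos (by omega), if_pos (by omega)]; exact hlt k (by omega)
      · subst h
        rw [if_pos le_rfl, if_neg (by omega)]
        exact hmono (k + 2) k (by omega) (by omega)
      · rw [if_neg (by omega), if_neg (by omega)]; exact hlt (k + 1) (by omega)
    · intro k hk
      dsimp only
      rcases lt_trichotomy k i with h | h | h
      · rw [if_pos (by omega), if_pos (by omega)]; exact hadm k (by omega)
      · subst h
        rw [if_pos le_rfl, if_neg (by omega)]
        exact hmerge
      · rw [if_neg (by omega), if_neg (by omega)]; exact hadm (k + 1) (by omega)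

lemma hp_lower (ℓ : ℕ) (a b : ℕ → ℝ)
    (ha : ∀ i ∈ Finset.Icc 1 ℓ, 0 < a i) (hb : ∀ i ∈ Finset.Icc 1 ℓ, 0 < b i)
    (n : ℕ) (u : ℕ → ℕ) (hcanon : IsCanonicalDiv ℓ a b n u)
    (x y : ℕ → ℝ) (hD : memD ℓ a b x y) :
    Tstar a b n u ≤ ∑ i ∈ Finset.Icc 1 ℓ, (x i + y i) := by
  have hanti := hp_ratio_anti ha hcanon
  obtain ⟨⟨h0, hend, hlt, hadm⟩, -⟩ := hcanon
  obtain ⟨hxy, -, hP⟩ := hD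
  have hmono := hp_umono hlt
  have hle : ∀ i ≤ n + 1, u i ≤ ℓ := by
    intro i hi
    rcases Nat.lt_or_ge i (n + 1) with h | h
    · rw [← hend]; exact (hmono _ _ h le_rfl).le
    · have : i = n + 1 := by omega
      rw [this, hend]
  have hmem : ∀ i ≤ n, ∀ j ∈ Finset.Icc (u i + 1) (u (i + 1)), j ∈ Finset.Icc 1 ℓ := by
    intro i hi j hj
    have := hle (i + 1) (by omega)
    rw [Finset.mem_Icc] at hj ⊢
    omega
  have hne : ∀ i ≤ n, (Finset.Icc (u i + 1) (u (i + 1))).Nonempty := by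
    intro i hi
    have := hlt i hi
    exact ⟨u (i + 1), Finset.mem_Icc.2 ⟨by omega, le_rfl⟩⟩
  set g : ℕ → ℝ := fun j => x j - (a j) ^ 2 / (2 * x j) - (b j) ^ 2 / (2 * y j) with hg
  set L : ℕ → ℝ := fun i => hpLam (fval ((∑ j ∈ Finset.Icc (u i + 1) (u (i + 1)), b j) ^ 2 /
    (2 * (∑ j ∈ Finset.Icc (u i + 1) (u (i + 1)), a j) ^ 2))) with hL
  set G : ℕ → ℝ := fun i => ∑ j ∈ Finset.Icc 1 (u i), g j with hG
  have hAbel := hp_abel n L G (fun i _ => hp_lam_nonneg _) ?_ (by simp [hG, h0]) ?_ n le_rfl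
  · have hb1 : ∀ i ∈ Finset.range (n + 1),
        blockTime (∑ j ∈ Finset.Icc (u i + 1) (u (i + 1)), a j)
          (∑ j ∈ Finset.Icc (u i + 1) (u (i + 1)), b j) + L i * (G (i + 1) - G i)
        ≤ ∑ j ∈ Finset.Icc 1 (u (i + 1)), (x j + y j) - ∑ j ∈ Finset.Icc 1 (u i), (x j + y j) := by
      intro i hi
      have hi' : i ≤ n := by rw [Finset.mem_range] at hi; omega
      have := hp_block _ a b x y (hne i hi') (fun j hj => ha j (hmem i hi' j hj))
        (fun j hj => hb j (hmem i hi' j hj)) (fun j hj => hxy j (hmem i hi' j hj))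
      rw [hp_sum_Icc (fun j => x j + y j) (hlt i hi').le, hp_sum_Icc (fun j => x j -
        (a j) ^ 2 / (2 * x j) - (b j) ^ 2 / (2 * y j)) (hlt i hi').le] at this
      exact this
    have hs := Finset.sum_le_sum hb1
    rw [Finset.sum_add_distrib,
      Finset.sum_range_sub (fun i => ∑ j ∈ Finset.Icc 1 (u i), (x j + y j))] at hs
    have hGn : 0 ≤ L n * G (n + 1) := by
      apply mul_nonneg (hp_lam_nonneg _)
      simp only [hG, hend]
      rcases Nat.eq_zero_or_pos ℓ with hz | hz
      · simp [hz]
      · exact hP ℓ (Finset.mem_Icc.2 ⟨hz, le_rfl⟩)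
    rw [h0, hend] at hs
    simp only [Finset.Icc_eq_empty_of_lt Nat.zero_lt_one, Finset.sum_empty, sub_zero] at hs
    unfold Tstar
    linarith
  · intro i hi
    have hr := hanti i hi
    unfold ratioBA at hr
    have pA : ∀ i ≤ n, 0 < ∑ j ∈ Finset.Icc (u i + 1) (u (i + 1)), a j := fun i hi =>
      Finset.sum_pos (fun j hj => ha j (hmem i hi j hj)) (hne i hi)
    have pB : ∀ i ≤ n, 0 < ∑ j ∈ Finset.Icc (u i + 1) (u (i + 1)), b j := fun i hi =>
      Finset.sum_pos (fun j hj => hb j (hmem i hi j hj)) (hne i hi)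
    have pA1 := pA (i + 1) (by omega)
    have pB1 := pB (i + 1) (by omega)
    have e : ∀ A B : ℝ, B ^ 2 / (2 * A ^ 2) = (B / A) ^ 2 / 2 := by
      intro A B; rw [div_pow, div_div, mul_comm]
    simp only [hL]
    apply hp_lam_mono (Real.sqrt_nonneg _)
    apply hp_fval_mono (by positivity)
    rw [e, e]
    have : 0 ≤ (∑ j ∈ Finset.Icc (u (i + 1) + 1) (u (i + 1 + 1)), b j) /
      (∑ j ∈ Finset.Icc (u (i + 1) + 1) (u (i + 1 + 1)), a j) := by positivity
    gcongr
  · intro i hi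
    simp only [hG]
    rcases Nat.eq_zero_or_pos (u i) with hz | hz
    · simp [hz]
    · exact hP (u i) (Finset.mem_Icc.2 ⟨hz, hle i hi⟩)

lemma hp_hat (ℓ : ℕ) (hℓ : 1 ≤ ℓ) (a b x y : ℕ → ℝ)
    (ha : 0 < a ℓ) (hD : memD ℓ a b x y) : ∃ xn yn : ℕ → ℝ, memDhat ℓ a b xn yn := by
  obtain ⟨hxy, hsum, hP⟩ := hD
  have hx := (hxy ℓ (Finset.mem_Icc.2 ⟨hℓ, le_rfl⟩)).1
  obtain ⟨k, rfl⟩ : ∃ k, ℓ = k + 1 := ⟨ℓ - 1, by omega⟩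
  have top : ∀ g : ℕ → ℝ, ∑ i ∈ Finset.Icc 1 (k + 1), g i
      = ∑ i ∈ Finset.Icc 1 k, g i + g (k + 1) := fun g => Finset.sum_Icc_succ_top (by omega) g
  set C := ∑ i ∈ Finset.Icc 1 k, (x i - (a i) ^ 2 / (2 * x i) - (b i) ^ 2 / (2 * y i)) with hC
  set X := x (k + 1)
  set A := a (k + 1)
  set R := (b (k + 1)) ^ 2 / (2 * y (k + 1)) with hR
  have hend := hP (k + 1) (Finset.mem_Icc.2 ⟨by omega, le_rfl⟩)
  rw [top, ← hC] at hend
  -- the function to which the intermediate value theorem is applied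
  obtain ⟨z, hz0, hzX, hz⟩ : ∃ z, 0 < z ∧ z ≤ X ∧ C + (z - A ^ 2 / (2 * z) - R) = 0 := by
    have hq : 0 < A ^ 2 / (2 * (|C - R| + X + 1)) := by
      have := abs_nonneg (C - R); positivity
    set z0 := min X (A ^ 2 / (2 * (|C - R| + X + 1))) with hz0
    have hz0p : 0 < z0 := lt_min hx hq
    have hz0X : z0 ≤ X := min_le_left _ _
    have hcont : ContinuousOn (fun z : ℝ => C + (z - A ^ 2 / (2 * z) - R)) (Set.Icc z0 X) := by
      have : ∀ z ∈ Set.Icc z0 X, 2 * z ≠ 0 := by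
        intro z hz
        have := hz0p.trans_le hz.1
        positivity
      fun_prop (disch := assumption)
    have hlow : C + (z0 - A ^ 2 / (2 * z0) - R) ≤ 0 := by
      have h1 : |C - R| + X + 1 ≤ A ^ 2 / (2 * z0) := by
        have h2 : z0 ≤ A ^ 2 / (2 * (|C - R| + X + 1)) := min_le_right _ _
        have h3 : 0 < |C - R| + X + 1 := by have := abs_nonneg (C - R); positivity
        rw [le_div_iff₀ (by positivity)] at h2 ⊢
        linarith
      have := le_abs_self (C - R)
      linarith
    have := intermediate_value_Icc hz0X hcont
    obtain ⟨z, hzm, hze⟩ := this ⟨hlow, hend⟩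
    exact ⟨z, hz0p.trans_le hzm.1, hzm.2, hze⟩
  set xn : ℕ → ℝ := fun i => if i = k + 1 then z else x i with hxn
  have hxk : ∀ i, i ≠ k + 1 → xn i = x i := fun i hi => by simp [hxn, hi]
  have hxt : xn (k + 1) = z := by simp [hxn]
  have low : ∀ m ≤ k, ∑ i ∈ Finset.Icc 1 m, (xn i - (a i) ^ 2 / (2 * xn i) - (b i) ^ 2 / (2 * y i))
      = ∑ i ∈ Finset.Icc 1 m, (x i - (a i) ^ 2 / (2 * x i) - (b i) ^ 2 / (2 * y i)) := by
    intro m hm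
    apply Finset.sum_congr rfl
    intro i hi
    rw [Finset.mem_Icc] at hi
    rw [hxk i (by omega)]
  have hzero : ∑ i ∈ Finset.Icc 1 (k + 1),
      (xn i - (a i) ^ 2 / (2 * xn i) - (b i) ^ 2 / (2 * y i)) = 0 := by
    rw [top, low k le_rfl, hxt]; exact hz
  refine ⟨xn, y, ⟨?_, ?_, ?_⟩, hzero⟩
  · intro i hi
    refine ⟨?_, (hxy i hi).2⟩
    by_cases h : i = k + 1
    · rw [h, hxt]; exact hz0
    · rw [hxk i h]; exact (hxy i hi).1
  · refine le_trans (Finset.sum_le_sum ?_) hsum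
    intro i _
    by_cases h : i = k + 1
    · subst h; rw [hxt]; linarith
    · rw [hxk i h]
  · intro m hm
    by_cases h : m = k + 1
    · rw [h, hzero]
    · rw [low m (by rw [Finset.mem_Icc] at hm; omega)]
      exact hP m hm

/-- `D̂` is nonempty iff `D` is nonempty; moreover, if `D` is nonempty, then
`T* ≤ Σ_i (x_i + y_i)` for every element of `D`. -/
theorem Dhat_nonempty_iff_D_nonempty (ℓ : ℕ) (hℓ : 1 ≤ ℓ) (a b : ℕ → ℝ)
    (ha : ∀ i ∈ Finset.Icc 1 ℓ, 0 < a i) (hb : ∀ i ∈ Finset.Icc 1 ℓ, 0 < b i)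
    (nstar : ℕ) (ustar : ℕ → ℕ) (hcanon : IsCanonicalDiv ℓ a b nstar ustar) :
    ((∃ x y : ℕ → ℝ, memDhat ℓ a b x y) ↔ (∃ x y : ℕ → ℝ, memD ℓ a b x y)) ∧
    ((∃ x y : ℕ → ℝ, memD ℓ a b x y) →
      ∀ x y : ℕ → ℝ, memD ℓ a b x y →
        Tstar a b nstar ustar ≤ ∑ i ∈ Finset.Icc 1 ℓ, (x i + y i)) := by
  refine ⟨⟨?_, ?_⟩, ?_⟩
  · rintro ⟨x, y, h⟩
    exact ⟨x, y, h.1⟩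
  · rintro ⟨x, y, h⟩
    exact hp_hat ℓ hℓ a b x y (ha ℓ (Finset.mem_Icc.2 ⟨hℓ, le_rfl⟩)) h
  · intro _ x y h
    exact hp_lower ℓ a b ha hb nstar ustar hcanon x y h
end
end

section
/- If D is nonempty, then the maximum of the objective function F over D equals (h*)²/2, where h* = √2 · (1 − T*). -/
open Finset

noncomputable section

/-- Branching speed parameter of a block with ratio `r`. -/
def pf (r : ℝ) : ℝ := fval (r ^ 2 / 2)

/-- Obstacle speed parameter of a block with ratio `r`. -/
def pk (r : ℝ) : ℝ := r / (2 * (pf r - 1 / (2 * pf r)))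

/-- Multiplier of a block with ratio `r`. -/
def pmu (r : ℝ) : ℝ := (pf r ^ 2 - 1 / 2) / (1 + 2 * pf r ^ 2)

lemma pf_sq (r : ℝ) : pf r ^ 2 = (1 + r ^ 2 / 2) / 2 + √((r ^ 2 / 2) ^ 2 / 4 + r ^ 2 / 2) := by
  unfold pf fval
  rw [Real.sq_sqrt]
  positivity

lemma pf_sq_gt (r : ℝ) (hr : 0 < r) : 1 / 2 < pf r ^ 2 := by
  rw [pf_sq]
  have := Real.sqrt_nonneg ((r ^ 2 / 2) ^ 2 / 4 + r ^ 2 / 2)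
  have : 0 < r ^ 2 := by positivity
  linarith

lemma pf_pos (r : ℝ) (hr : 0 < r) : 0 < pf r := by
  have h := pf_sq_gt r hr
  have h0 : 0 ≤ pf r := Real.sqrt_nonneg _
  rcases h0.lt_or_eq with h1 | h1
  · exact h1
  · rw [← h1] at h; norm_num at h

lemma pf_eq (r : ℝ) : (pf r ^ 2 - 1 / 2) ^ 2 = r ^ 2 / 2 * (pf r ^ 2 + 1 / 2) := by
  have h := pf_sq r
  have hs : √((r ^ 2 / 2) ^ 2 / 4 + r ^ 2 / 2) ^ 2 = (r ^ 2 / 2) ^ 2 / 4 + r ^ 2 / 2 :=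
    Real.sq_sqrt (by positivity)
  rw [h]
  linear_combination hs

lemma pf_sub_pos (r : ℝ) (hr : 0 < r) : 0 < pf r - 1 / (2 * pf r) := by
  have h1 := pf_pos r hr
  have h2 := pf_sq_gt r hr
  have : pf r - 1 / (2 * pf r) = (pf r ^ 2 - 1 / 2) / pf r := by field_simp
  rw [this]
  apply div_pos _ h1
  linarith

lemma pk_pos (r : ℝ) (hr : 0 < r) : 0 < pk r := by
  have := pf_sub_pos r hr
  unfold pk
  positivity

lemma pf_pk (r : ℝ) (hr : 0 < r) : pf r - 1 / (2 * pf r) = r / (2 * pk r) := by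
  have := pf_sub_pos r hr
  unfold pk
  generalize pf r - 1 / (2 * pf r) = z at *
  field_simp

lemma pk_sq (r : ℝ) (hr : 0 < r) : 2 * pk r ^ 2 = 1 / 2 + pmu r := by
  have h1 := pf_pos r hr
  have h2 := pf_sq_gt r hr
  have h3 := pf_eq r
  have hk : pk r = r * pf r / (2 * pf r ^ 2 - 1) := by
    have : pf r - 1 / (2 * pf r) = (2 * pf r ^ 2 - 1) / (2 * pf r) := by field_simp
    unfold pk
    rw [this]
    have : 0 < 2 * pf r ^ 2 - 1 := by linarith
    field_simp
  rw [hk]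
  unfold pmu
  have h4 : 2 * pf r ^ 2 - 1 ≠ 0 := by linarith
  generalize pf r = f at *
  have h5 : (2 * f ^ 2 - 1) ^ 2 = r ^ 2 * (2 * f ^ 2 + 1) := by linear_combination 4 * h3
  rw [div_pow, h5]
  field_simp
  ring

lemma pmu_nonneg (r : ℝ) (hr : 0 < r) : 0 ≤ pmu r := by
  have h2 := pf_sq_gt r hr
  unfold pmu
  apply div_nonneg <;> linarith

lemma pmu_rel (r : ℝ) : 1 / 2 + pmu r = 2 * pf r ^ 2 * (1 / 2 - pmu r) := by
  unfold pmu
  have : 0 < 1 + 2 * pf r ^ 2 := by positivity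
  field_simp
  ring

lemma pmu_half (r : ℝ) : 0 ≤ 1 / 2 - pmu r := by
  have : 0 < 1 + 2 * pf r ^ 2 := by positivity
  have h : 1 / 2 - pmu r = 1 / (1 + 2 * pf r ^ 2) := by
    unfold pmu
    field_simp
    ring
  rw [h]
  positivity

lemma pmu_mono (r s : ℝ) (hr : 0 < r) (h : r ≤ s) : pmu r ≤ pmu s := by
  have hsq : r ^ 2 ≤ s ^ 2 := by gcongr
  have hf : pf r ^ 2 ≤ pf s ^ 2 := by
    rw [pf_sq, pf_sq]
    gcongr
  unfold pmu
  rw [div_le_div_iff₀ (by positivity) (by positivity)]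
  nlinarith

lemma blockTime_eq (A B : ℝ) (hA : 0 < A) :
    blockTime A B = A * pf (B / A) + B * pk (B / A) := by
  have h : B ^ 2 / (2 * A ^ 2) = (B / A) ^ 2 / 2 := by field_simp
  unfold blockTime pk
  rw [h]
  change A * pf (B / A) + B ^ 2 / (2 * A * (pf (B / A) - 1 / (2 * pf (B / A)))) = _
  generalize pf (B / A) - 1 / (2 * pf (B / A)) = z
  congr 1
  rw [mul_assoc, mul_left_comm, ← div_div, ← div_div, ← div_div]
  ring

lemma blockTime_eq' (A B : ℝ) (hA : 0 < A) (hB : 0 < B) :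
    blockTime A B = A * (2 * pf (B / A) * (1 / 2 - pmu (B / A))) + B * (2 * pk (B / A)) := by
  rw [blockTime_eq A B hA]
  have hr : 0 < B / A := by positivity
  have h1 := pf_pos _ hr
  have h2 := pk_pos _ hr
  have h3 := pf_pk _ hr
  have h4 := pk_sq _ hr
  have h5 := pmu_rel (B / A)
  have hB' : B = A * (B / A) := by field_simp
  generalize B / A = r at *
  subst hB'
  generalize pf r = f at *
  generalize pk r = k at *
  generalize pmu r = mu at *
  have h6 : r = 2 * k * (f - 1 / (2 * f)) := by rw [h3]; field_simp
  have h7 : r * f = k * (2 * f ^ 2 - 1) := by rw [h6]; field_simp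
  have h8 : r * k = 2 * f * mu := by
    have : f * (r * k) = f * (2 * f * mu) := by
      linear_combination k * h7 + (2 * f ^ 2 - 1) / 2 * h4 - 1 / 2 * h5
    exact mul_left_cancel₀ h1.ne' this
  linear_combination -A * h8

lemma dual_pt (r a b x y : ℝ) (hr : 0 < r) (hx : 0 < x) (hy : 0 < y) :
    a * (2 * pf r * (1 / 2 - pmu r)) + b * (2 * pk r) +
      pmu r * (x - a ^ 2 / (2 * x) - b ^ 2 / (2 * y)) ≤
    x / 2 + y + a ^ 2 / (4 * x) + b ^ 2 / (4 * y) := by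
  have h4 := pk_sq _ hr
  have h5 := pmu_rel r
  have h6 := pmu_half r
  generalize pf r = f at *
  generalize pk r = k at *
  generalize pmu r = mu at *
  have e1 : 0 ≤ (1 / 2 - mu) * ((x - a * f) ^ 2 / x) := by positivity
  have e2 : 0 ≤ (y - b * k) ^ 2 / y := by positivity
  have : x / 2 + y + a ^ 2 / (4 * x) + b ^ 2 / (4 * y) - (a * (2 * f * (1 / 2 - mu)) + b * (2 * k) +
      mu * (x - a ^ 2 / (2 * x) - b ^ 2 / (2 * y))) =
      (1 / 2 - mu) * ((x - a * f) ^ 2 / x) + (y - b * k) ^ 2 / y := by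
    have q1 : (x - a * f) ^ 2 / x = x - 2 * a * f + f ^ 2 * (a ^ 2 / x) := by field_simp; ring
    have q2 : (y - b * k) ^ 2 / y = y - 2 * b * k + k ^ 2 * (b ^ 2 / y) := by field_simp; ring
    have q3 : a ^ 2 / (4 * x) = (a ^ 2 / x) / 4 := by field_simp
    have q4 : a ^ 2 / (2 * x) = (a ^ 2 / x) / 2 := by field_simp
    have q5 : b ^ 2 / (4 * y) = (b ^ 2 / y) / 4 := by field_simp
    have q6 : b ^ 2 / (2 * y) = (b ^ 2 / y) / 2 := by field_simp
    rw [q1, q2, q3, q4, q5, q6]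
    linear_combination (a ^ 2 / x) / 2 * h5 - (b ^ 2 / y) / 2 * h4
  linarith

lemma sum_split (g : ℕ → ℝ) (q p m : ℕ) (h1 : q ≤ p) (h2 : p ≤ m) :
    ∑ i ∈ Finset.Icc (q + 1) m, g i =
      ∑ i ∈ Finset.Icc (q + 1) p, g i + ∑ i ∈ Finset.Icc (p + 1) m, g i := by
  induction m, h2 using Nat.le_induction with
  | base => simp
  | succ m hm ih =>
    rw [Finset.sum_Icc_succ_top (by omega), Finset.sum_Icc_succ_top (by omega), ih]
    ring

lemma sum_pos_Icc (ℓ : ℕ) (g : ℕ → ℝ) (hg : ∀ i ∈ Finset.Icc 1 ℓ, 0 < g i) (p q : ℕ)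
    (h1 : p < q) (h2 : q ≤ ℓ) : 0 < ∑ i ∈ Finset.Icc (p + 1) q, g i := by
  apply Finset.sum_pos
  · intro i hi
    rw [Finset.mem_Icc] at hi
    exact hg i (Finset.mem_Icc.2 ⟨by omega, by omega⟩)
  · exact ⟨q, Finset.mem_Icc.2 ⟨by omega, le_rfl⟩⟩

lemma med_left {A1 B1 A2 B2 : ℝ} (h1 : 0 < A1) (h2 : 0 < A2) (h : B1 / A1 < B2 / A2) :
    B1 / A1 < (B1 + B2) / (A1 + A2) := by
  rw [div_lt_div_iff₀ h1 h2] at h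
  rw [div_lt_div_iff₀ h1 (by positivity)]
  linarith

lemma med_right {A1 B1 A2 B2 : ℝ} (h1 : 0 < A1) (h2 : 0 < A2) (h : B1 / A1 < B2 / A2) :
    (B1 + B2) / (A1 + A2) < B2 / A2 := by
  rw [div_lt_div_iff₀ h1 h2] at h
  rw [div_lt_div_iff₀ (by positivity) h2]
  linarith

lemma adm_mono {ℓ : ℕ} {a b : ℕ → ℝ} {n : ℕ} {u : ℕ → ℕ} (h : AdmissibleDiv ℓ a b n u)
    (i j : ℕ) (hij : i < j) (hj : j ≤ n + 1) : u i < u j := by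
  induction j, hij using Nat.le_induction with
  | base => exact h.2.2.1 i (by omega)
  | succ m hm ih => exact (ih (by omega)).trans (h.2.2.1 m (by omega))

lemma adm_le {ℓ : ℕ} {a b : ℕ → ℝ} {n : ℕ} {u : ℕ → ℕ} (h : AdmissibleDiv ℓ a b n u)
    (j : ℕ) (hj : j ≤ n + 1) : u j ≤ ℓ := by
  rcases hj.lt_or_eq with h1 | h1
  · have := adm_mono h j (n + 1) h1 le_rfl
    rw [h.2.1] at this
    exact this.le
  · rw [h1, h.2.1]

lemma ratio_split {ℓ : ℕ} {a b : ℕ → ℝ} (ha : ∀ i ∈ Finset.Icc 1 ℓ, 0 < a i) (p m q : ℕ)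
    (h1 : p < m) (h2 : m < q) (h3 : q ≤ ℓ)
    (h : ratioBA a b (p + 1) m < ratioBA a b (m + 1) q) :
    ratioBA a b (p + 1) m < ratioBA a b (p + 1) q ∧
      ratioBA a b (p + 1) q < ratioBA a b (m + 1) q := by
  unfold ratioBA at *
  rw [sum_split a p m q h1.le h2.le, sum_split b p m q h1.le h2.le]
  have e1 := sum_pos_Icc ℓ a ha p m h1 (by omega)
  have e2 := sum_pos_Icc ℓ a ha m q h2 (by omega)
  exact ⟨med_left e1 e2 h, med_right e1 e2 h⟩

/-- Merging two neighbouring blocks. -/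
lemma adm_merge {ℓ : ℕ} {a b : ℕ → ℝ} (ha : ∀ i ∈ Finset.Icc 1 ℓ, 0 < a i)
    (n : ℕ) (u : ℕ → ℕ) (h : AdmissibleDiv ℓ a b (n + 1) u) (j : ℕ) (hj : j ≤ n)
    (hlt : ratioBA a b (u j + 1) (u (j + 1)) < ratioBA a b (u (j + 1) + 1) (u (j + 2))) :
    AdmissibleDiv ℓ a b n (fun i => if i ≤ j then u i else u (i + 1)) := by
  have hm := adm_mono h
  have hle := adm_le h
  obtain ⟨h0, h1, h2, h3⟩ := h
  refine ⟨by simp [h0], ?_, ?_, ?_⟩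
  · have : ¬ (n + 1 ≤ j) := by omega
    simp only [this, if_false]
    exact h1
  · intro i hi
    dsimp only
    split_ifs
    all_goals first | omega | (apply hm <;> omega)
  · intro i hi m
    dsimp only
    rcases lt_trichotomy i j with hij | hij | hij
    · rw [if_pos (by omega), if_pos (by omega)]
      exact h3 i (by omega) m
    · subst hij
      rw [if_pos le_rfl, if_neg (by omega)]
      intro hm1 hm2
      change m < u (i + 2) at hm2
      change _ < ratioBA a b (m + 1) (u (i + 2))
      have l1 : u i < u (i + 1) := hm _ _ (by omega) (by omega)
      have l2 : u (i + 1) < u (i + 2) := hm _ _ (by omega) (by omega)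
      have l3 : u (i + 2) ≤ ℓ := hle _ (by omega)
      rcases lt_trichotomy m (u (i + 1)) with hc | hc | hc
      · have k1 := h3 i (by omega) m hm1 hc
        have k2 := ratio_split ha _ _ _ hm1 hc (by omega) k1
        have k3 : ratioBA a b (u i + 1) m < ratioBA a b (u (i + 1) + 1) (u (i + 2)) :=
          k2.1.trans hlt
        have e1 := sum_pos_Icc ℓ a ha m (u (i + 1)) hc (by omega)
        have e2 := sum_pos_Icc ℓ a ha (u (i + 1)) (u (i + 2)) l2 (by omega)
        have e0 := sum_pos_Icc ℓ a ha (u i) m hm1 (by omega)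
        unfold ratioBA at k1 k3 ⊢
        rw [sum_split a m (u (i + 1)) (u (i + 2)) hc.le l2.le,
          sum_split b m (u (i + 1)) (u (i + 2)) hc.le l2.le]
        rw [lt_div_iff₀ e1] at k1
        rw [lt_div_iff₀ e2] at k3
        rw [lt_div_iff₀ (by positivity)]
        linarith
      · subst hc
        exact hlt
      · have k1 := h3 (i + 1) (by omega) m hc hm2
        have k2 := ratio_split ha _ _ _ hc hm2 (by omega) k1
        have k3 : ratioBA a b (u i + 1) (u (i + 1)) < ratioBA a b (m + 1) (u (i + 2)) :=
          hlt.trans k2.2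
        have k1' : ratioBA a b (u (i + 1) + 1) m < ratioBA a b (m + 1) (u (i + 2)) := k1
        have e1 := sum_pos_Icc ℓ a ha (u i) (u (i + 1)) l1 (by omega)
        have e2 := sum_pos_Icc ℓ a ha (u (i + 1)) m hc (by omega)
        unfold ratioBA at k1' k3 ⊢
        rw [sum_split a (u i) (u (i + 1)) m l1.le hc.le,
          sum_split b (u i) (u (i + 1)) m l1.le hc.le]
        rw [div_lt_iff₀ e2] at k1'
        rw [div_lt_iff₀ e1] at k3
        rw [div_lt_iff₀ (by positivity)]
        linarith
    · rw [if_neg (by omega), if_neg (by omega)]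
      exact h3 (i + 1) (by omega) m

lemma canon_anti {ℓ : ℕ} {a b : ℕ → ℝ} (ha : ∀ i ∈ Finset.Icc 1 ℓ, 0 < a i)
    (n : ℕ) (u : ℕ → ℕ) (h : IsCanonicalDiv ℓ a b n u) (j : ℕ) (hj : j + 1 ≤ n) :
    ratioBA a b (u (j + 1) + 1) (u (j + 2)) ≤ ratioBA a b (u j + 1) (u (j + 1)) := by
  by_contra! hlt
  obtain ⟨n, rfl⟩ : ∃ k, n = k + 1 := ⟨n - 1, by omega⟩
  have hm := adm_mono h.1
  have := adm_merge ha n u h.1 j (by omega) hlt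
  obtain ⟨i, hi, he⟩ := (h.2 (u (j + 1))).1 ⟨j + 1, by omega, rfl⟩ n _ this
  split_ifs at he with hc
  · have := hm i (j + 1) (by omega) (by omega)
    omega
  · have := hm (j + 1) (i + 1) (by omega) (by omega)
    omega

/-- The average of the two factors' complements. -/
def Gt (a b x y : ℕ → ℝ) (i : ℕ) : ℝ :=
  x i / 2 + y i + a i ^ 2 / (4 * x i) + b i ^ 2 / (4 * y i)

/-- The summand of the cumulative constraint. -/
def Wt (a b x y : ℕ → ℝ) (i : ℕ) : ℝ :=
  x i - (a i) ^ 2 / (2 * x i) - (b i) ^ 2 / (2 * y i)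

lemma lower_bound {ℓ : ℕ} {a b : ℕ → ℝ} (ha : ∀ i ∈ Finset.Icc 1 ℓ, 0 < a i)
    (hb : ∀ i ∈ Finset.Icc 1 ℓ, 0 < b i)
    (n : ℕ) (u : ℕ → ℕ) (h : IsCanonicalDiv ℓ a b n u) (x y : ℕ → ℝ)
    (hD : memD ℓ a b x y) :
    Tstar a b n u ≤ ∑ i ∈ Finset.Icc 1 ℓ, Gt a b x y i := by
  have hm := adm_mono h.1
  have hle := adm_le h.1
  have hr : ∀ j ≤ n, 0 < ratioBA a b (u j + 1) (u (j + 1)) := by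
    intro j hj
    have l1 := hm j (j + 1) (by omega) (by omega)
    have l2 := hle (j + 1) (by omega)
    exact div_pos (sum_pos_Icc ℓ b hb _ _ l1 l2) (sum_pos_Icc ℓ a ha _ _ l1 l2)
  have hblock : ∀ j ≤ n, blockTime (∑ i ∈ Finset.Icc (u j + 1) (u (j + 1)), a i)
      (∑ i ∈ Finset.Icc (u j + 1) (u (j + 1)), b i) +
      pmu (ratioBA a b (u j + 1) (u (j + 1))) *
        (∑ i ∈ Finset.Icc (u j + 1) (u (j + 1)), Wt a b x y i) ≤
      ∑ i ∈ Finset.Icc (u j + 1) (u (j + 1)), Gt a b x y i := by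
    intro j hj
    have l1 := hm j (j + 1) (by omega) (by omega)
    have l2 := hle (j + 1) (by omega)
    rw [blockTime_eq' _ _ (sum_pos_Icc ℓ a ha _ _ l1 l2) (sum_pos_Icc ℓ b hb _ _ l1 l2)]
    rw [Finset.sum_mul, Finset.sum_mul, Finset.mul_sum, ← Finset.sum_add_distrib,
      ← Finset.sum_add_distrib]
    apply Finset.sum_le_sum
    intro i hi
    rw [Finset.mem_Icc] at hi
    have := hD.1 i (Finset.mem_Icc.2 ⟨by omega, by omega⟩)
    exact dual_pt _ (a i) (b i) (x i) (y i) (hr j hj) this.1 this.2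
  have key : ∀ j ≤ n, ∑ i ∈ Finset.range (j + 1),
      blockTime (∑ k ∈ Finset.Icc (u i + 1) (u (i + 1)), a k)
      (∑ k ∈ Finset.Icc (u i + 1) (u (i + 1)), b k) +
      pmu (ratioBA a b (u j + 1) (u (j + 1))) * (∑ i ∈ Finset.Icc 1 (u (j + 1)), Wt a b x y i) ≤
      ∑ i ∈ Finset.Icc 1 (u (j + 1)), Gt a b x y i := by
    intro j
    induction j with
    | zero =>
      intro hj
      have := hblock 0 hj
      have h0 : u 0 = 0 := h.1.1
      simpa [h0] using this
    | succ j ih =>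
      intro hj
      have ih := ih (by omega)
      have hb' := hblock (j + 1) hj
      have l1 := hm (j + 1) (j + 2) (by omega) (by omega)
      have l0 := hm 0 (j + 1) (by omega) (by omega)
      have s1 := sum_split (Gt a b x y) 0 (u (j + 1)) (u (j + 2)) (by omega) (by omega)
      have s2 := sum_split (Wt a b x y) 0 (u (j + 1)) (u (j + 2)) (by omega) (by omega)
      rw [zero_add] at s1 s2
      have hmu := pmu_mono _ _ (hr (j + 1) hj) (canon_anti ha n u h j hj)
      have hW : 0 ≤ ∑ i ∈ Finset.Icc 1 (u (j + 1)), Wt a b x y i :=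
        hD.2.2 (u (j + 1)) (Finset.mem_Icc.2 ⟨by omega, hle _ (by omega)⟩)
      have hp := mul_le_mul_of_nonneg_right hmu hW
      rw [Finset.sum_range_succ]
      change _ + _ + _ * (∑ i ∈ Finset.Icc 1 (u (j + 2)), Wt a b x y i) ≤
        ∑ i ∈ Finset.Icc 1 (u (j + 2)), Gt a b x y i
      rw [s1, s2, mul_add]
      linarith
  have hk := key n le_rfl
  rw [h.1.2.1] at hk
  have l0 := hm 0 (n + 1) (by omega) (by omega)
  rw [h.1.2.1] at l0
  have hW : 0 ≤ ∑ i ∈ Finset.Icc 1 ℓ, Wt a b x y i :=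
    hD.2.2 ℓ (Finset.mem_Icc.2 ⟨by omega, le_rfl⟩)
  have hp : 0 ≤ pmu (ratioBA a b (u n + 1) ℓ) * ∑ i ∈ Finset.Icc 1 ℓ, Wt a b x y i := by
    apply mul_nonneg _ hW
    apply pmu_nonneg
    have := hr n le_rfl
    rwa [h.1.2.1] at this
  unfold Tstar
  linarith

lemma exists_rho {ℓ : ℕ} {a b : ℕ → ℝ} (n : ℕ) (u : ℕ → ℕ) (h : AdmissibleDiv ℓ a b n u)
    (R : ℕ → ℝ) (j : ℕ) (hj : j ≤ n + 1) :
    ∃ ρ : ℕ → ℝ, ∀ i < j, ∀ m, u i < m → m ≤ u (i + 1) → ρ m = R i := by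
  induction j with
  | zero => exact ⟨fun _ => 0, by intro i hi; omega⟩
  | succ j ih =>
    obtain ⟨ρ, hρ⟩ := ih (by omega)
    refine ⟨fun m => if m ≤ u j then ρ m else R j, ?_⟩
    intro i hi m h1 h2
    dsimp only
    rcases Nat.lt_succ_iff_lt_or_eq.1 hi with hij | hij
    · have : u (i + 1) ≤ u j := by
        rcases (show i + 1 ≤ j from hij).lt_or_eq with h3 | h3
        · exact (adm_mono h _ _ h3 (by omega)).le
        · rw [h3]
      rw [if_pos (by omega)]
      exact hρ i hij m h1 h2
    · subst hij
      rw [if_neg (by omega)]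

lemma exists_opt {ℓ : ℕ} {a b : ℕ → ℝ} (ha : ∀ i ∈ Finset.Icc 1 ℓ, 0 < a i)
    (hb : ∀ i ∈ Finset.Icc 1 ℓ, 0 < b i)
    (n : ℕ) (u : ℕ → ℕ) (h : AdmissibleDiv ℓ a b n u) :
    ∃ x y : ℕ → ℝ, (∀ i ∈ Finset.Icc 1 ℓ, 0 < x i ∧ 0 < y i) ∧
      ∑ i ∈ Finset.Icc 1 ℓ, (x i + y i) = Tstar a b n u ∧
      (∀ m ∈ Finset.Icc 1 ℓ, 0 ≤ ∑ i ∈ Finset.Icc 1 m, Wt a b x y i) ∧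
      ∑ i ∈ Finset.Icc 1 ℓ, Wt a b x y i = 0 := by
  have hm := adm_mono h
  have hle := adm_le h
  have hr : ∀ j ≤ n, 0 < ratioBA a b (u j + 1) (u (j + 1)) := by
    intro j hj
    have l1 := hm j (j + 1) (by omega) (by omega)
    have l2 := hle (j + 1) (by omega)
    exact div_pos (sum_pos_Icc ℓ b hb _ _ l1 l2) (sum_pos_Icc ℓ a ha _ _ l1 l2)
  obtain ⟨ρ, hρ⟩ := exists_rho n u h (fun j => ratioBA a b (u j + 1) (u (j + 1))) (n + 1) le_rfl
  have hex : ∀ m, 1 ≤ m → m ≤ ℓ → ∃ j ≤ n, u j < m ∧ m ≤ u (j + 1) := by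
    intro m h1 h2
    have : ∀ j ≤ n + 1, m ≤ u j → ∃ i < j, u i < m ∧ m ≤ u (i + 1) := by
      intro j
      induction j with
      | zero => intro _ h3; rw [h.1] at h3; omega
      | succ j ih =>
        intro h3 h4
        by_cases hc : m ≤ u j
        · obtain ⟨i, hi, h5⟩ := ih (by omega) hc
          exact ⟨i, by omega, h5⟩
        · exact ⟨j, by omega, by omega, h4⟩
    obtain ⟨j, hj, h5⟩ := this (n + 1) le_rfl (by rw [h.2.1]; exact h2)
    exact ⟨j, by omega, h5⟩
  let x : ℕ → ℝ := fun i => a i * pf (ρ i)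
  let y : ℕ → ℝ := fun i => b i * pk (ρ i)
  have hWt : ∀ j ≤ n, ∀ m, u j < m → m ≤ u (j + 1) →
      ∑ i ∈ Finset.Icc (u j + 1) m, Wt a b x y i =
      ((∑ i ∈ Finset.Icc (u j + 1) m, a i) * ratioBA a b (u j + 1) (u (j + 1)) -
        ∑ i ∈ Finset.Icc (u j + 1) m, b i) / (2 * pk (ratioBA a b (u j + 1) (u (j + 1)))) := by
    intro j hj m h1 h2
    rw [Finset.sum_mul, ← Finset.sum_sub_distrib, Finset.sum_div]
    apply Finset.sum_congr rfl
    intro i hi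
    rw [Finset.mem_Icc] at hi
    have l2 := hle (j + 1) (by omega)
    have hρi : ρ i = _ := hρ j (by omega) i (by omega) (by omega)
    have hai := ha i (Finset.mem_Icc.2 ⟨by omega, by omega⟩)
    have hbi := hb i (Finset.mem_Icc.2 ⟨by omega, by omega⟩)
    have e1 := pf_pk _ (hr j hj)
    have e2 := pf_pos _ (hr j hj)
    have e3 := pk_pos _ (hr j hj)
    simp only [Wt, x, y, hρi]
    generalize ratioBA a b (u j + 1) (u (j + 1)) = r at *
    have q1 : a i ^ 2 / (2 * (a i * pf r)) = a i * (1 / (2 * pf r)) := by field_simp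
    have q2 : b i ^ 2 / (2 * (b i * pk r)) = b i * (1 / (2 * pk r)) := by field_simp
    rw [q1, q2]
    linear_combination a i * e1
  have hW0 : ∀ j ≤ n + 1, ∑ i ∈ Finset.Icc 1 (u j), Wt a b x y i = 0 := by
    intro j
    induction j with
    | zero => intro _; rw [h.1]; simp
    | succ j ih =>
      intro hj
      have l1 := hm j (j + 1) (by omega) (by omega)
      have l2 := hle (j + 1) (by omega)
      have s := sum_split (Wt a b x y) 0 (u j) (u (j + 1)) (by omega) l1.le
      rw [zero_add] at s
      rw [s, ih (by omega), hWt j (by omega) _ l1 le_rfl, zero_add]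
      have := sum_pos_Icc ℓ a ha _ _ l1 l2
      have e : (∑ i ∈ Finset.Icc (u j + 1) (u (j + 1)), a i) * ratioBA a b (u j + 1) (u (j + 1)) =
        ∑ i ∈ Finset.Icc (u j + 1) (u (j + 1)), b i := by
        unfold ratioBA
        field_simp
      rw [e]
      simp
  refine ⟨x, y, ?_, ?_, ?_, ?_⟩
  · intro i hi
    have hai := ha i hi
    have hbi := hb i hi
    rw [Finset.mem_Icc] at hi
    obtain ⟨j, hj, h1, h2⟩ := hex i hi.1 hi.2
    have hρi : ρ i = _ := hρ j (by omega) i h1 h2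
    have e2 := pf_pos _ (hr j hj)
    have e3 := pk_pos _ (hr j hj)
    simp only [x, y, hρi]
    exact ⟨mul_pos hai e2, mul_pos hbi e3⟩
  · have : ∀ j ≤ n + 1, ∑ i ∈ Finset.Icc 1 (u j), (x i + y i) = ∑ i ∈ Finset.range j,
        blockTime (∑ k ∈ Finset.Icc (u i + 1) (u (i + 1)), a k)
        (∑ k ∈ Finset.Icc (u i + 1) (u (i + 1)), b k) := by
      intro j
      induction j with
      | zero => intro _; rw [h.1]; simp
      | succ j ih =>
        intro hj
        have l1 := hm j (j + 1) (by omega) (by omega)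
        have l2 := hle (j + 1) (by omega)
        have s := sum_split (fun i => x i + y i) 0 (u j) (u (j + 1)) (by omega) l1.le
        rw [zero_add] at s
        rw [s, ih (by omega), Finset.sum_range_succ,
          blockTime_eq _ _ (sum_pos_Icc ℓ a ha _ _ l1 l2)]
        congr 1
        rw [Finset.sum_mul, Finset.sum_mul, ← Finset.sum_add_distrib]
        apply Finset.sum_congr rfl
        intro i hi
        rw [Finset.mem_Icc] at hi
        have hρi : ρ i = _ := hρ j (by omega) i (by omega) (by omega)
        simp only [x, y, hρi]
        rfl
    have := this (n + 1) le_rfl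
    rw [h.2.1] at this
    exact this
  · intro m hm'
    rw [Finset.mem_Icc] at hm'
    obtain ⟨j, hj, h1, h2⟩ := hex m hm'.1 hm'.2
    have l2 := hle (j + 1) (by omega)
    have s := sum_split (Wt a b x y) 0 (u j) m (by omega) h1.le
    rw [zero_add] at s
    rw [s, hW0 j (by omega), zero_add, hWt j hj m h1 h2]
    have e3 := pk_pos _ (hr j hj)
    apply div_nonneg _ (by positivity)
    have e1 := sum_pos_Icc ℓ a ha _ _ h1 hm'.2
    have hle' : ratioBA a b (u j + 1) m ≤ ratioBA a b (u j + 1) (u (j + 1)) := by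
      rcases h2.lt_or_eq with h3 | h3
      · exact (ratio_split ha _ _ _ h1 h3 l2 (h.2.2.2 j hj m h1 h3)).1.le
      · rw [h3]
    have : ratioBA a b (u j + 1) m =
      (∑ i ∈ Finset.Icc (u j + 1) m, b i) / (∑ i ∈ Finset.Icc (u j + 1) m, a i) := rfl
    rw [this, div_le_iff₀ e1] at hle'
    linarith
  · have := hW0 (n + 1) le_rfl
    rwa [h.2.1] at this

/-- If `D` is nonempty, the maximum of `F` over `D` equals `(h*)²/2` with
`h* = √2 (1 − T*)`, where `T*` is the total optimal time of the canonical admissible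
division into blocks. -/
theorem max_over_D_general (ℓ : ℕ) (hℓ : 1 ≤ ℓ) (a b : ℕ → ℝ)
    (ha : ∀ i ∈ Finset.Icc 1 ℓ, 0 < a i) (hb : ∀ i ∈ Finset.Icc 1 ℓ, 0 < b i)
    (nstar : ℕ) (ustar : ℕ → ℕ) (hcanon : IsCanonicalDiv ℓ a b nstar ustar)
    (hD : ∃ x y : ℕ → ℝ, memD ℓ a b x y) :
    IsGreatest {v : ℝ | ∃ x y : ℕ → ℝ, memD ℓ a b x y ∧ Fobj ℓ a b x y = v}
      ((Real.sqrt 2 * (1 - Tstar a b nstar ustar)) ^ 2 / 2) := by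
  have hsq : (Real.sqrt 2 * (1 - Tstar a b nstar ustar)) ^ 2 / 2 =
      (1 - Tstar a b nstar ustar) ^ 2 := by
    rw [mul_pow, Real.sq_sqrt (by norm_num)]
    ring
  rw [hsq]
  have hP : ∀ x y : ℕ → ℝ,
      ∑ i ∈ Finset.Icc 1 ℓ, (y i + (a i) ^ 2 / (2 * x i) + (b i) ^ 2 / (2 * y i)) =
      ∑ i ∈ Finset.Icc 1 ℓ, (x i + y i) - ∑ i ∈ Finset.Icc 1 ℓ, Wt a b x y i := by
    intro x y
    rw [← Finset.sum_sub_distrib]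
    apply Finset.sum_congr rfl
    intro i _
    unfold Wt
    ring
  have hG : ∀ x y : ℕ → ℝ, ∑ i ∈ Finset.Icc 1 ℓ, Gt a b x y i =
      ∑ i ∈ Finset.Icc 1 ℓ, (x i + y i) - (∑ i ∈ Finset.Icc 1 ℓ, Wt a b x y i) / 2 := by
    intro x y
    rw [Finset.sum_div, ← Finset.sum_sub_distrib]
    apply Finset.sum_congr rfl
    intro i _
    unfold Wt Gt
    have q3 : a i ^ 2 / (4 * x i) = (a i ^ 2 / (2 * x i)) / 2 := by rw [div_div]; ring
    have q4 : b i ^ 2 / (4 * y i) = (b i ^ 2 / (2 * y i)) / 2 := by rw [div_div]; ring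
    rw [q3, q4]
    ring
  have hWl : ∀ x y : ℕ → ℝ, memD ℓ a b x y → 0 ≤ ∑ i ∈ Finset.Icc 1 ℓ, Wt a b x y i :=
    fun x y h => h.2.2 ℓ (Finset.mem_Icc.2 ⟨hℓ, le_rfl⟩)
  constructor
  · obtain ⟨x0, y0, h0⟩ := hD
    have hT := lower_bound ha hb nstar ustar hcanon x0 y0 h0
    rw [hG] at hT
    have hw := hWl x0 y0 h0
    have hs := h0.2.1
    obtain ⟨x, y, h1, h2, h3, h4⟩ := exists_opt ha hb nstar ustar hcanon.1
    refine ⟨x, y, ⟨h1, by rw [h2]; linarith, h3⟩, ?_⟩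
    unfold Fobj
    rw [hP, h4, h2]
    ring
  · rintro v ⟨x, y, hxy, rfl⟩
    have hT := lower_bound ha hb nstar ustar hcanon x y hxy
    rw [hG] at hT
    have hw := hWl x y hxy
    have hs := hxy.2.1
    unfold Fobj
    rw [hP]
    generalize ∑ i ∈ Finset.Icc 1 ℓ, (x i + y i) = S at *
    generalize ∑ i ∈ Finset.Icc 1 ℓ, Wt a b x y i = W at *
    have : (1 - (S - W / 2)) ^ 2 ≤ (1 - Tstar a b nstar ustar) ^ 2 := by
      apply pow_le_pow_left₀ <;> linarith
    nlinarith [sq_nonneg W]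
end
end

section
/- Let (c_1,…,c_{ℓ−1}) ∈ D^c, let m ∈ {1,…,ℓ} and let C ∈ I(c_m) (with the conventions c_0 = c_ℓ = 0). Then the set D^m_x(c_{m−1}, C) is a closed interval, i.e., a closed convex subset of ℝ. -/
open Finset

noncomputable section

/-- Convexity of `x ↦ 1 / (2 x)` scaled by a nonnegative number. -/
lemma inv_combo (A p q s t : ℝ) (hA : 0 ≤ A) (hp : 0 < p) (hq : 0 < q) (hs : 0 ≤ s)
    (ht : 0 ≤ t) (hst : s + t = 1) :
    A / (2 * (s * p + t * q)) ≤ s * (A / (2 * p)) + t * (A / (2 * q)) := by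
  have hpos : 0 < s * p + t * q := by
    rcases hs.eq_or_lt with h | h
    · have : t = 1 := by linarith
      subst this; subst h; simpa using hq
    · have := mul_pos h hp
      have := mul_nonneg ht hq.le
      linarith
  have e : s * (A / (2 * p)) + t * (A / (2 * q)) = A * (s * q + t * p) / (2 * (p * q)) := by
    field_simp
  rw [e, div_le_div_iff₀ (by positivity) (by positivity)]
  have key : p * q ≤ (s * q + t * p) * (s * p + t * q) := by
    have ht' : t = 1 - s := by linarith
    subst ht'
    nlinarith [mul_nonneg (mul_nonneg hs ht) (sq_nonneg (p - q))]
  nlinarith [mul_le_mul_of_nonneg_left key hA]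

/-- The equality constraint may be relaxed to an inequality without changing the projection. -/
lemma mem_Dmx_iff_relaxed (a b : ℕ → ℝ) (N : ℝ) (m : ℕ) (c C : ℝ) (hb : 0 < b m) (x : ℝ) :
    x ∈ Dmx a b N m c C ↔ ∃ y, 0 < x ∧ 0 < y ∧ x + y ≤ N ∧
      C ≤ c + x - (a m) ^ 2 / (2 * x) - (b m) ^ 2 / (2 * y) := by
  constructor
  · rintro ⟨y, h1, h2, h3, h4⟩
    exact ⟨y, h1, h2, h3, h4.ge⟩
  · rintro ⟨y, h1, h2, h3, h4⟩
    have hB : 0 < (b m) ^ 2 / (2 * y) := by positivity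
    set g := c + x - (a m) ^ 2 / (2 * x) - C with hg
    have hgB : (b m) ^ 2 / (2 * y) ≤ g := by linarith
    have hg0 : 0 < g := by linarith
    refine ⟨(b m) ^ 2 / (2 * g), h1, by positivity, ?_, ?_⟩
    · have : (b m) ^ 2 / (2 * g) ≤ y := by
        rw [div_le_iff₀ (by positivity)] at hgB ⊢
        linarith
      linarith
    · have : (b m) ^ 2 / (2 * ((b m) ^ 2 / (2 * g))) = g := by
        field_simp
      rw [this]; linarith

/-- Polynomial description of the projection by non-strict inequalities. -/
lemma mem_Dmx_iff_poly (a b : ℕ → ℝ) (N : ℝ) (m : ℕ) (c C : ℝ) (ha : 0 < a m) (hb : 0 < b m)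
    (x : ℝ) :
    x ∈ Dmx a b N m c C ↔ 0 ≤ x ∧ 0 ≤ 2 * x * (c + x - C) - (a m) ^ 2 ∧
      (b m) ^ 2 * x ≤ (N - x) * (2 * x * (c + x - C) - (a m) ^ 2) := by
  rw [mem_Dmx_iff_relaxed a b N m c C hb]
  constructor
  · rintro ⟨y, h1, h2, h3, h4⟩
    have hB : 0 < (b m) ^ 2 / (2 * y) := by positivity
    have e : 2 * x * (c + x - C) - (a m) ^ 2
        = 2 * x * (c + x - (a m) ^ 2 / (2 * x) - C) := by
      field_simp
      ring
    have h5 : 2 * x * ((b m) ^ 2 / (2 * y)) ≤ 2 * x * (c + x - (a m) ^ 2 / (2 * x) - C) :=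
      mul_le_mul_of_nonneg_left (by linarith) (by positivity)
    rw [← e] at h5
    have h0 : 0 < 2 * x * ((b m) ^ 2 / (2 * y)) := by positivity
    refine ⟨h1.le, by linarith, ?_⟩
    have e2 : (b m) ^ 2 * x = y * (2 * x * ((b m) ^ 2 / (2 * y))) := by
      field_simp
    rw [e2]
    exact mul_le_mul (by linarith) h5 h0.le (by linarith)
  · rintro ⟨h1, h2, h3⟩
    have hx : 0 < x := by
      rcases h1.eq_or_lt with h | h
      · subst h
        have : 0 < (a m) ^ 2 := by positivity
        linarith
      · exact h
    have hbx : 0 < (b m) ^ 2 * x := by positivity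
    have hy : 0 < N - x := by
      by_contra hcon
      nlinarith [mul_nonneg (sub_nonneg.2 (not_lt.1 hcon)) h2]
    refine ⟨N - x, hx, hy, by linarith, ?_⟩
    have e : c + x - (a m) ^ 2 / (2 * x) - (b m) ^ 2 / (2 * (N - x)) - C
        = ((N - x) * (2 * x * (c + x - C) - (a m) ^ 2) - (b m) ^ 2 * x)
          / (2 * x * (N - x)) := by
      have := hy.ne'
      field_simp
      ring
    have : 0 ≤ c + x - (a m) ^ 2 / (2 * x) - (b m) ^ 2 / (2 * (N - x)) - C := by
      rw [e]
      exact div_nonneg (by linarith) (by positivity)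
    linarith

/-- For `(c_1,…,c_{ℓ−1}) ∈ D^c`, `m ∈ {1,…,ℓ}` and `C ∈ I(c_m)`, the set
`D^m_x(c_{m−1}, C)` is a closed interval, i.e. a closed convex subset of `ℝ`. -/
theorem Dmx_closed_interval (ℓ : ℕ) (hℓ : 1 ≤ ℓ) (a b : ℕ → ℝ)
    (ha : ∀ i ∈ Finset.Icc 1 ℓ, 0 < a i) (hb : ∀ i ∈ Finset.Icc 1 ℓ, 0 < b i)
    (N : ℝ) (hN : 1 < N)
    (c : ℕ → ℝ) (hc : memDc ℓ a b N c)
    (m : ℕ) (hm : m ∈ Finset.Icc 1 ℓ)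
    (C : ℝ) (hC : memDc ℓ a b N (Function.update c m C)) :
    IsClosed (Dmx a b N m (cbar ℓ c (m - 1)) C) ∧
    Convex ℝ (Dmx a b N m (cbar ℓ c (m - 1)) C) := by
  have ham := ha m hm
  have hbm := hb m hm
  generalize cbar ℓ c (m - 1) = k
  constructor
  · have e : Dmx a b N m k C = {x : ℝ | 0 ≤ x ∧ 0 ≤ 2 * x * (k + x - C) - (a m) ^ 2 ∧
        (b m) ^ 2 * x ≤ (N - x) * (2 * x * (k + x - C) - (a m) ^ 2)} := by
      ext x
      exact mem_Dmx_iff_poly a b N m k C ham hbm x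
    rw [e]
    have c1 : IsClosed {x : ℝ | 0 ≤ x} := isClosed_le (by fun_prop) (by fun_prop)
    have c2 : IsClosed {x : ℝ | 0 ≤ 2 * x * (k + x - C) - (a m) ^ 2} :=
      isClosed_le (by fun_prop) (by fun_prop)
    have c3 : IsClosed {x : ℝ | (b m) ^ 2 * x ≤
        (N - x) * (2 * x * (k + x - C) - (a m) ^ 2)} :=
      isClosed_le (by fun_prop) (by fun_prop)
    exact c1.inter (c2.inter c3)
  · intro x hx x' hx' s t hs ht hst
    rw [mem_Dmx_iff_relaxed a b N m k C hbm] at hx hx' ⊢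
    obtain ⟨y, h1, h2, h3, h4⟩ := hx
    obtain ⟨y', h1', h2', h3', h4'⟩ := hx'
    simp only [smul_eq_mul]
    have p1 : 0 < s * x + t * x' := (convex_Ioi (0 : ℝ)) h1 h1' hs ht hst
    have p2 : 0 < s * y + t * y' := (convex_Ioi (0 : ℝ)) h2 h2' hs ht hst
    refine ⟨s * y + t * y', p1, p2, ?_, ?_⟩
    · have : s * N + t * N = N := by rw [← add_mul, hst, one_mul]
      linarith [mul_le_mul_of_nonneg_left h3 hs, mul_le_mul_of_nonneg_left h3' ht]
    · have i1 := inv_combo ((a m) ^ 2) x x' s t (sq_nonneg _) h1 h1' hs ht hst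
      have i2 := inv_combo ((b m) ^ 2) y y' s t (sq_nonneg _) h2 h2' hs ht hst
      have e1 : s * C + t * C = C := by rw [← add_mul, hst, one_mul]
      have e2 : s * k + t * k = k := by rw [← add_mul, hst, one_mul]
      linarith [mul_le_mul_of_nonneg_left h4 hs, mul_le_mul_of_nonneg_left h4' ht]
end
end

section
/- Let (c_1,…,c_{ℓ−1}) ∈ D^c and m ∈ {1,…,ℓ−1} (with the conventions c_0 = c_ℓ = 0). For all Ĉ ∈ I(c_m), all x̂ ∈ D^m_x(c_{m−1}, Ĉ) and all ε > 0 such that {x ∈ ℝ : |x − x̂| < 2ε} ⊆ D^m_x(c_{m−1}, Ĉ), there exists δ > 0 such that for all C ∈ I(c_m) with |C − Ĉ| < δ one has {x ∈ ℝ : |x − x̂| < ε} ⊆ D^m_x(c_{m−1}, C). -/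
open Finset

noncomputable section

/-- Explicit description of `D^m_x`. -/
theorem mem_Dmx_iff (a b : ℕ → ℝ) (N : ℝ) (m : ℕ) (c C x : ℝ) (hb : 0 < b m) :
    x ∈ Dmx a b N m c C ↔ 0 < x ∧ x < N ∧
      C ≤ c + x - (a m) ^ 2 / 2 * (1 / x) - (b m) ^ 2 / 2 * (1 / (N - x)) := by
  have e1 : (a m) ^ 2 / (2 * x) = (a m) ^ 2 / 2 * (1 / x) := by
    rw [div_mul_div_comm, mul_one]
  have hB : 0 < (b m) ^ 2 / 2 := by positivity
  unfold Dmx memDm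
  simp only [Set.mem_setOf_eq, e1]
  constructor
  · rintro ⟨y, hx, hy, hs, h⟩
    refine ⟨hx, by linarith, ?_⟩
    have e2 : (b m) ^ 2 / (2 * y) = (b m) ^ 2 / 2 * (1 / y) := by
      rw [div_mul_div_comm, mul_one]
    have h1 : 1 / (N - x) ≤ 1 / y := one_div_le_one_div_of_le hy (by linarith)
    have h2 := mul_le_mul_of_nonneg_left h1 hB.le
    rw [e2] at h
    linarith
  · rintro ⟨hx, hxN, h⟩
    have hNx : 0 < N - x := by linarith
    set K := c + x - (a m) ^ 2 / 2 * (1 / x) - C with hK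
    have h1 : (b m) ^ 2 / 2 * (1 / (N - x)) ≤ K := by linarith
    have hKpos : 0 < K := lt_of_lt_of_le (by positivity) h1
    refine ⟨(b m) ^ 2 / 2 / K, hx, by positivity, ?_, ?_⟩
    · have : (b m) ^ 2 / 2 / K ≤ N - x := by
        rw [div_le_iff₀ hKpos]
        rw [mul_one_div, div_le_iff₀ hNx] at h1
        linarith
      linarith
    · have : (b m) ^ 2 / (2 * ((b m) ^ 2 / 2 / K)) = K := by
        field_simp
      rw [this, hK]
      ring

/-- Quantitative midpoint convexity of `1 / x`. -/
theorem inv_midpoint (N x e : ℝ) (he : 0 < e) (hx : e < x) (hN : x ≤ N) :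
    2 / x + 2 * e ^ 2 / N ^ 3 ≤ 1 / (x - e) + 1 / (x + e) := by
  have hx0 : 0 < x := by linarith
  have h1 : 0 < x - e := by linarith
  have h2 : 0 < x + e := by linarith
  have h3 : 1 / (x - e) + 1 / (x + e) = 2 / x + 2 * e ^ 2 / (x * ((x - e) * (x + e))) := by
    field_simp
    ring
  rw [h3]
  have h4 : x * ((x - e) * (x + e)) ≤ N ^ 3 := by
    calc x * ((x - e) * (x + e)) ≤ x ^ 3 := by nlinarith [mul_pos hx0 (mul_pos he he)]
      _ ≤ N ^ 3 := by gcongr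
  gcongr

/-- Continuity of the domain `D^m_x(c_{m−1}, ·)`: if a `2ε`-ball around `x̂`
lies in `D^m_x(c_{m−1}, Ĉ)`, then for `C ∈ I(c_m)` close enough to `Ĉ`, the `ε`-ball around
`x̂` lies in `D^m_x(c_{m−1}, C)`. -/
theorem Dmx_continuous_in_C (ℓ : ℕ) (hℓ : 1 ≤ ℓ) (a b : ℕ → ℝ)
    (ha : ∀ i ∈ Finset.Icc 1 ℓ, 0 < a i) (hb : ∀ i ∈ Finset.Icc 1 ℓ, 0 < b i)
    (N : ℝ) (hN : 1 < N)
    (c : ℕ → ℝ) (hc : memDc ℓ a b N c)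
    (m : ℕ) (hm1 : 1 ≤ m) (hm2 : m < ℓ)
    (Chat : ℝ) (hChat : memDc ℓ a b N (Function.update c m Chat))
    (xhat : ℝ) (hxhat : xhat ∈ Dmx a b N m (cbar ℓ c (m - 1)) Chat)
    (ε : ℝ) (hε : 0 < ε)
    (hball : ∀ x : ℝ, |x - xhat| < 2 * ε → x ∈ Dmx a b N m (cbar ℓ c (m - 1)) Chat) :
    ∃ δ : ℝ, 0 < δ ∧
      ∀ C : ℝ, memDc ℓ a b N (Function.update c m C) → |C - Chat| < δ →
        ∀ x : ℝ, |x - xhat| < ε → x ∈ Dmx a b N m (cbar ℓ c (m - 1)) C := by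
  have hm : m ∈ Finset.Icc 1 ℓ := Finset.mem_Icc.mpr ⟨hm1, hm2.le⟩
  have ham := ha m hm
  have hbm := hb m hm
  have hA : 0 < (a m) ^ 2 / 2 := by positivity
  have hB : 0 < (b m) ^ 2 / 2 := by positivity
  have hN0 : 0 < N := by linarith
  refine ⟨(a m) ^ 2 / 2 * (ε ^ 2 / N ^ 3), by positivity, ?_⟩
  intro C _ hC x hx
  rw [abs_lt] at hC hx
  obtain ⟨p1, p2, p3⟩ := (mem_Dmx_iff a b N m _ _ _ hbm).1
    (hball (x - ε) (abs_lt.2 ⟨by linarith, by linarith⟩))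
  obtain ⟨q1, q2, q3⟩ := (mem_Dmx_iff a b N m _ _ _ hbm).1
    (hball (x + ε) (abs_lt.2 ⟨by linarith, by linarith⟩))
  refine (mem_Dmx_iff a b N m _ _ _ hbm).2 ⟨by linarith, by linarith, ?_⟩
  have k1 := mul_le_mul_of_nonneg_left
    (inv_midpoint N x ε hε (by linarith) (by linarith)) hA.le
  have k2 := mul_le_mul_of_nonneg_left
    (inv_midpoint N (N - x) ε hε (by linarith) (by linarith)) hB.le
  have k3 : 0 ≤ (b m) ^ 2 / 2 * (ε ^ 2 / N ^ 3) := by positivity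
  rw [show N - (x - ε) = N - x + ε by ring] at p3
  rw [show N - (x + ε) = N - x - ε by ring] at q3
  have r1 : 2 / x + 2 * ε ^ 2 / N ^ 3 = 2 * (1 / x) + 2 * (ε ^ 2 / N ^ 3) := by ring
  have r2 : 2 / (N - x) + 2 * ε ^ 2 / N ^ 3 = 2 * (1 / (N - x)) + 2 * (ε ^ 2 / N ^ 3) := by ring
  rw [r1] at k1
  rw [r2] at k2
  linarith
end
end
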